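/- arXiv:2201.01043 — 3 statements merged into one kernel-verified Lean document; each statement's English description precedes it below -/
import Mathlib

section
/- Let k and m be non-negative integers with m ≤ k+1, and let G be a connected K_{1,4}-free simple graph of order n. If every independent set of m+2 vertices in G has degree sum at least n−k, then G has a spanning tree T with |L(T)| + |B(T)| ≤ m+k+2, i.e., with at most m+k+2 leaves and branch vertices in total. -/
open SimpleGraph Finset List

open scoped Classical

variable {V : Type*}

/-- `G` contains no induced copy of `K_{1,4}` (a star with four edges). -/
def K14Free (G : SimpleGraph V) : Prop :=
  ¬ ∃ c a b d e : V, a ≠ b ∧ a ≠ d ∧ a ≠ e ∧ b ≠ d ∧ b ≠ e ∧ d ≠ e ∧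
    G.Adj c a ∧ G.Adj c b ∧ G.Adj c d ∧ G.Adj c e ∧
    ¬G.Adj a b ∧ ¬G.Adj a d ∧ ¬G.Adj a e ∧ ¬G.Adj b d ∧ ¬G.Adj b e ∧ ¬G.Adj d e

/-- `s` is an independent set of vertices of `G`. -/
def IsIndepFinset (G : SimpleGraph V) (s : Finset V) : Prop :=
  ∀ u ∈ s, ∀ v ∈ s, u ≠ v → ¬G.Adj u v

/-- The set `L(T)` of leaves (vertices of degree one) of `T`. -/
noncomputable def leafSet [Fintype V] (T : SimpleGraph V) : Finset V :=
  Finset.univ.filter fun v => T.degree v = 1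

/-- The set `B(T)` of branch vertices (vertices of degree at least three) of `T`. -/
noncomputable def branchSet [Fintype V] (T : SimpleGraph V) : Finset V :=
  Finset.univ.filter fun v => 3 ≤ T.degree v

/-- `v` is an oblique neighbor of the edge `e` with respect to the (spanning) tree `T` of `G`:
`e = s(a,b)` where `b` is the endpoint of `e` farthest from `v` in `T`, and `v b ∈ E(G)`. -/
def IsObliqueNbr (G T : SimpleGraph V) (e : Sym2 V) (v : V) : Prop :=
  ∃ a b : V, e = s(a, b) ∧ T.dist v a < T.dist v b ∧ G.Adj v b

/-- The number of vertices of the reducible stem `R_Stem(T)` of `T`: a vertex `v` survives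
iff for every leaf `x` of `T` the (unique) path of `T` from `x` to `v` contains a branch
vertex (so exactly the vertices not lying strictly before the first branch vertex on the
path leaving some leaf). -/
noncomputable def rstemCard [Fintype V] (T : SimpleGraph V) : ℕ :=
  {v : V | ∀ x : V, T.degree x = 1 → ∀ p : T.Walk x v, p.IsPath →
    ∃ w ∈ p.support, 3 ≤ T.degree w}.ncard


/-! ### Sides of an edge in a tree, and edge swaps -/

namespace KFree

/-- `v` lies on the `a`-side of the tree edge `a w`. -/
abbrev Sd (T : SimpleGraph V) (a w v : V) : Prop := T.dist v a < T.dist v w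

/-- `T - a w + x y`. -/
def swp (T : SimpleGraph V) (a w x y : V) : SimpleGraph V :=
  T.deleteEdges {s(a, w)} ⊔ SimpleGraph.edge x y

lemma swp_adj {T : SimpleGraph V} {a w x y p q : V} :
    (swp T a w x y).Adj p q ↔
      (T.Adj p q ∧ s(p, q) ≠ s(a, w)) ∨ (x ≠ y ∧ ((p = x ∧ q = y) ∨ (p = y ∧ q = x))) := by
  simp only [swp, sup_adj, deleteEdges_adj, Set.mem_singleton_iff, edge_adj, ne_eq]
  constructor
  · rintro (h | ⟨h, h'⟩)
    · exact Or.inl h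
    · right
      rcases h with ⟨rfl, rfl⟩ | ⟨rfl, rfl⟩
      · exact ⟨h', Or.inl ⟨rfl, rfl⟩⟩
      · exact ⟨fun e => h' e.symm, Or.inr ⟨rfl, rfl⟩⟩
  · rintro (h | ⟨h, h'⟩)
    · exact Or.inl h
    · right
      rcases h' with ⟨rfl, rfl⟩ | ⟨rfl, rfl⟩
      · exact ⟨Or.inl ⟨rfl, rfl⟩, h⟩
      · exact ⟨Or.inr ⟨rfl, rfl⟩, fun e => h e.symm⟩

lemma sd_self {T : SimpleGraph V} {a w : V} (h : T.Adj a w) : Sd T a w a := by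
  simp [Sd, dist_eq_one_iff_adj.2 h]

lemma sd_or {T : SimpleGraph V} (hT : T.IsTree) {a w : V} (h : T.Adj a w) (v : V) :
    Sd T a w v ∨ Sd T w a v := by
  have := hT.dist_ne_of_adj v h
  simp only [Sd]; omega

lemma sd_not {T : SimpleGraph V} {a w v : V} (h : Sd T a w v) : ¬ Sd T w a v := by
  simp only [Sd] at *; omega

lemma sd_not_iff {T : SimpleGraph V} (hT : T.IsTree) {a w : V} (h : T.Adj a w) (v : V) :
    ¬ Sd T a w v ↔ Sd T w a v :=
  ⟨fun h' => (sd_or hT h v).resolve_left h', fun h' => sd_not h'⟩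

lemma sd_dist {T : SimpleGraph V} (hT : T.IsTree) {a w v : V} (h : T.Adj a w) (hs : Sd T a w v) :
    T.dist v w = T.dist v a + 1 := by
  have := hT.dist_eq_dist_add_one_of_adj v h
  simp only [Sd] at hs; omega

lemma sd_exists {T : SimpleGraph V} (hT : T.IsTree) {v w : V} (h : v ≠ w) :
    ∃ a, T.Adj a w ∧ Sd T a w v := by
  obtain ⟨p, hp, hl⟩ := hT.connected.exists_path_of_dist v w
  have hn : ¬ p.Nil := by
    intro hn; exact h hn.eq
  refine ⟨p.penultimate, p.adj_penultimate hn, ?_⟩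
  have h1 := dist_le p.dropLast
  have h2 : p.dropLast.length + 1 = p.length := Walk.length_dropLast_add_one hn
  simp only [Sd]; omega

lemma sd_unique {T : SimpleGraph V} (hT : T.IsTree) {v w a b : V} (ha : T.Adj a w) (hb : T.Adj b w)
    (sa : Sd T a w v) (sb : Sd T b w v) : a = b := by
  obtain ⟨p, hp⟩ := hT.connected.exists_walk_length_eq_dist v a
  obtain ⟨q, hq⟩ := hT.connected.exists_walk_length_eq_dist v b
  have h1 := sd_dist hT ha sa
  have h2 := sd_dist hT hb sb
  have hp' : (p.concat ha).IsPath := Walk.isPath_of_length_eq_dist _ (by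
    rw [Walk.length_concat]; omega)
  have hq' : (q.concat hb).IsPath := Walk.isPath_of_length_eq_dist _ (by
    rw [Walk.length_concat]; omega)
  have h3 : p.concat ha = q.concat hb :=
    (hT.existsUnique_path v w).unique hp' hq'
  have h4 := congrArg Walk.penultimate h3
  simpa using h4

lemma sd_other {T : SimpleGraph V} (hT : T.IsTree) {v w a y : V} (ha : T.Adj a w) (hy : T.Adj y w)
    (sa : Sd T a w v) (hne : y ≠ a) : Sd T w y v := by
  rw [← sd_not_iff hT hy]
  intro h
  exact hne (sd_unique hT hy ha h sa)

lemma sd_reach {T : SimpleGraph V} (hT : T.IsTree) {a w : V} {v : V}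
    (hs : Sd T a w v) : (T.deleteEdges {s(a, w)}).Reachable v a := by
  obtain ⟨p, hp⟩ := hT.connected.exists_walk_length_eq_dist v a
  refine ⟨p.toDeleteEdge s(a, w) ?_⟩
  intro he
  have hw : w ∈ p.support := Walk.snd_mem_support_of_mem_edges p he
  have h1 := dist_le (p.takeUntil w hw)
  have h2 := Walk.length_takeUntil_le_length p hw
  simp only [Sd] at hs; omega

lemma not_reach {T : SimpleGraph V} (hT : T.IsTree) {a w : V} (h : T.Adj a w) :
    ¬ (T.deleteEdges {s(a, w)}).Reachable a w := by
  have := isAcyclic_iff_forall_adj_isBridge.1 hT.isAcyclic h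
  rwa [isBridge_iff] at this

lemma reach_sd {T : SimpleGraph V} (hT : T.IsTree) {a w : V} (h : T.Adj a w) {v : V}
    (hr : (T.deleteEdges {s(a, w)}).Reachable v a) : Sd T a w v := by
  by_contra hc
  have h1 := sd_reach hT ((sd_not_iff hT h v).1 hc)
  rw [Sym2.eq_swap] at h1
  exact not_reach hT h (hr.symm.trans h1)

lemma sd_adj {T : SimpleGraph V} (hT : T.IsTree) {a w : V} (h : T.Adj a w) {p q : V}
    (hpq : T.Adj p q) (hne : s(p, q) ≠ s(a, w)) (hs : Sd T a w p) : Sd T a w q := by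
  refine reach_sd hT h (Reachable.trans (Adj.reachable ?_) (sd_reach hT hs))
  rw [deleteEdges_adj]
  exact ⟨hpq.symm, by rwa [Set.mem_singleton_iff, Sym2.eq_swap]⟩

lemma sd_ne {T : SimpleGraph V} {a w x y : V} (hx : Sd T a w x) (hy : Sd T w a y) : x ≠ y := by
  rintro rfl; exact sd_not hx hy

lemma not_adj_del {T : SimpleGraph V} (hT : T.IsTree) {a w x y : V} (h : T.Adj a w)
    (hx : Sd T a w x) (hy : Sd T w a y) : ¬ (T.deleteEdges {s(a, w)}).Reachable x y := by
  intro hr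
  have h2 := sd_reach hT hy
  rw [Sym2.eq_swap] at h2
  exact not_reach hT h ((sd_reach hT hx).symm.trans (hr.trans h2))

lemma swp_tree {T : SimpleGraph V} (hT : T.IsTree) {a w x y : V} (h : T.Adj a w)
    (hx : Sd T a w x) (hy : Sd T w a y) : (swp T a w x y).IsTree := by
  have hle : T.deleteEdges {s(a, w)} ≤ swp T a w x y := le_sup_left
  have hxy : (swp T a w x y).Adj x y := by
    rw [swp_adj]; exact Or.inr ⟨sd_ne hx hy, Or.inl ⟨rfl, rfl⟩⟩
  have hx' := (sd_reach hT hx).mono hle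
  have key : ∀ u, (swp T a w x y).Reachable u x := by
    intro u
    rcases sd_or hT h u with hu | hu
    · exact ((sd_reach hT hu).mono hle).trans hx'.symm
    · have h1 := sd_reach hT hu
      have h2 := sd_reach hT hy
      rw [Sym2.eq_swap] at h1 h2
      exact ((h1.trans h2.symm).mono hle).trans hxy.symm.reachable
  have : Nonempty V := ⟨a⟩
  refine ⟨⟨fun u v => (key u).trans (key v).symm⟩, ?_⟩
  exact IsAcyclic.sup_edge_of_not_reachable (not_adj_del hT h hx hy)
    (hT.isAcyclic.anti (deleteEdges_le _))

lemma swp_le {G T : SimpleGraph V} (hT : T ≤ G) {a w x y : V} (hxy : G.Adj x y) :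
    swp T a w x y ≤ G := by
  intro p q h
  rw [swp_adj] at h
  rcases h with h | ⟨-, ⟨rfl, rfl⟩ | ⟨rfl, rfl⟩⟩
  · exact hT h.1
  · exact hxy
  · exact hxy.symm

lemma swp_adj_new {T : SimpleGraph V} {a w x y : V} (h : x ≠ y) : (swp T a w x y).Adj x y := by
  rw [swp_adj]; exact Or.inr ⟨h, Or.inl ⟨rfl, rfl⟩⟩

lemma swp_sd {T : SimpleGraph V} (hT : T.IsTree) {a w x y u : V} (h : T.Adj a w)
    (hx : Sd T a w x) (hy : Sd T w a y) (hu : Sd T a w u) : Sd (swp T a w x y) x y u := by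
  refine reach_sd (swp_tree hT h hx hy) (swp_adj_new (sd_ne hx hy)) ?_
  refine ((sd_reach hT hu).trans (sd_reach hT hx).symm).mono ?_
  intro p q hpq
  rw [deleteEdges_adj] at hpq ⊢
  refine ⟨swp_adj.2 (Or.inl ⟨hpq.1, hpq.2⟩), ?_⟩
  intro he
  rw [Set.mem_singleton_iff] at he
  have hn := not_adj_del hT h hx hy
  apply hn
  rw [Sym2.eq_iff] at he
  rcases he with ⟨rfl, rfl⟩ | ⟨rfl, rfl⟩
  · exact Adj.reachable (by rw [deleteEdges_adj]; exact hpq)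
  · exact (Adj.reachable (by rw [deleteEdges_adj]; exact hpq)).symm

lemma swp_degree [Fintype V] {T : SimpleGraph V} (hT : T.IsTree) {a w x y : V} (h : T.Adj a w)
    (hx : Sd T a w x) (hy : Sd T w a y) (u : V) :
    (swp T a w x y).degree u + (if u = a then 1 else 0) + (if u = w then 1 else 0) =
      T.degree u + (if u = x then 1 else 0) + (if u = y then 1 else 0) := by
  have haw := h.ne
  have hxy := sd_ne hx hy
  have hn : ¬ (T.deleteEdges {s(a, w)}).Adj x y := fun hh => not_adj_del hT h hx hy hh.reachable
  -- both degrees are compared with the degree in the deleted graph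
  have e1 : (T.deleteEdges {s(a, w)}).degree u + (if u = a then 1 else 0) + (if u = w then 1 else 0)
      = T.degree u := by
    have : T.neighborFinset u = (T.deleteEdges {s(a, w)}).neighborFinset u ∪
        ((if u = a then {w} else ∅) ∪ (if u = w then {a} else ∅)) := by
      ext q
      simp only [mem_neighborFinset, Finset.mem_union, deleteEdges_adj, Set.mem_singleton_iff,
        Sym2.eq_iff]
      have h' := h.symm
      split_ifs with h1 h2 h2 <;> grind
    have c := congrArg Finset.card this
    rw [card_neighborFinset_eq_degree, Finset.card_union_of_disjoint,
      card_neighborFinset_eq_degree] at c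
    · rw [c]; split_ifs with h1 h2 h2 <;> simp_all
    · rw [Finset.disjoint_left]
      intro q hq hq'
      simp only [mem_neighborFinset, deleteEdges_adj, Set.mem_singleton_iff,
        Sym2.eq_iff] at hq
      split_ifs at hq' with h1 h2 h2 <;> simp at hq' <;> grind
  have e2 : (T.deleteEdges {s(a, w)}).degree u + (if u = x then 1 else 0) + (if u = y then 1 else 0)
      = (swp T a w x y).degree u := by
    have : (swp T a w x y).neighborFinset u = (T.deleteEdges {s(a, w)}).neighborFinset u ∪
        ((if u = x then {y} else ∅) ∪ (if u = y then {x} else ∅)) := by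
      ext q
      simp only [mem_neighborFinset, Finset.mem_union, deleteEdges_adj, Set.mem_singleton_iff,
        swp_adj]
      split_ifs with h1 h2 h2 <;> simp <;> grind
    have c := congrArg Finset.card this
    rw [card_neighborFinset_eq_degree, Finset.card_union_of_disjoint,
      card_neighborFinset_eq_degree] at c
    · rw [c]; split_ifs with h1 h2 h2 <;> simp_all
    · rw [Finset.disjoint_left]
      intro q hq hq'
      have hn' : ¬ (T.deleteEdges {s(a, w)}).Adj y x := fun hh => hn hh.symm
      rw [mem_neighborFinset] at hq
      split_ifs at hq' with h1 h2 h2 <;> simp at hq' <;> grind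
  omega

lemma leaf_nbr [Fintype V] {T : SimpleGraph V} {a w y : V} (hl : T.degree a = 1)
    (h : T.Adj a w) (hy : T.Adj a y) : y = w := by
  rw [← card_neighborFinset_eq_degree, Finset.card_eq_one] at hl
  obtain ⟨z, hz⟩ := hl
  have h1 : w ∈ T.neighborFinset a := by rwa [mem_neighborFinset]
  have h2 : y ∈ T.neighborFinset a := by rwa [mem_neighborFinset]
  rw [hz, Finset.mem_singleton] at h1 h2
  rw [h1, h2]

lemma leaf_side [Fintype V] {T : SimpleGraph V} (hT : T.IsTree) {a w v : V} (hl : T.degree a = 1)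
    (h : T.Adj a w) (hs : Sd T a w v) : v = a := by
  by_contra hne
  obtain ⟨b, hb, hsb⟩ := sd_exists hT hne
  have : b = w := leaf_nbr hl h hb.symm
  subst this
  exact sd_not hs hsb

lemma exists_other [Fintype V] {T : SimpleGraph V} {w : V} (s : Finset V)
    (hd : s.card < T.degree w) : ∃ y, T.Adj w y ∧ y ∉ s := by
  rw [← card_neighborFinset_eq_degree] at hd
  obtain ⟨y, hy, hy'⟩ := Finset.exists_mem_notMem_of_card_lt_card hd
  exact ⟨y, by rwa [mem_neighborFinset] at hy, hy'⟩

lemma le_degree [Fintype V] {T : SimpleGraph V} {w : V} (s : Finset V)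
    (hs : ∀ y ∈ s, T.Adj w y) : s.card ≤ T.degree w := by
  rw [← card_neighborFinset_eq_degree]
  exact Finset.card_le_card fun y hy => by rw [mem_neighborFinset]; exact hs y hy

/-! ### Spanning trees with the minimum number of leaves -/

lemma mem_leafSet [Fintype V] {T : SimpleGraph V} {v : V} : v ∈ leafSet T ↔ T.degree v = 1 := by
  simp [leafSet]

lemma mem_branchSet [Fintype V] {T : SimpleGraph V} {v : V} :
    v ∈ branchSet T ↔ 3 ≤ T.degree v := by
  simp [branchSet]

lemma one_le_deg [Fintype V] {T : SimpleGraph V} (hT : T.IsTree) {u v : V} (h : v ≠ u) :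
    1 ≤ T.degree u := by
  obtain ⟨a, ha, -⟩ := sd_exists hT h
  exact (T.degree_pos_iff_exists_adj u).2 ⟨a, ha.symm⟩

lemma tri {T : SimpleGraph V} (hT : T.IsTree) (u v z : V) :
    T.dist u v ≤ T.dist u z + T.dist v z := by
  rw [T.dist_comm (u := v) (v := z)]
  exact hT.connected.dist_triangle

lemma three_leaves [Fintype V] {T : SimpleGraph V} (hT : T.IsTree) {u v x : V}
    (hu : T.degree u = 1) (hv : T.degree v = 1) (hx : T.degree x = 1)
    (huv : u ≠ v) (hux : u ≠ x) (hvx : v ≠ x) :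
    ∃ m q, 3 ≤ T.degree m ∧ T.Adj m q ∧ Sd T m q u ∧ Sd T q m v := by
  obtain ⟨m, hm, hmin⟩ := Finset.exists_min_image
    (Finset.univ.filter fun z => T.dist u z + T.dist v z = T.dist u v) (fun z => T.dist x z)
    ⟨u, by simp [T.dist_comm]⟩
  simp only [Finset.mem_filter, Finset.mem_univ, true_and] at hm hmin
  have hmx : x ≠ m := by
    rintro rfl
    obtain ⟨p, hp, sp⟩ := sd_exists hT hux
    obtain ⟨q, hq, sq⟩ := sd_exists hT hvx
    have : q = p := leaf_nbr hx hp.symm hq.symm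
    subst this
    have h1 := sd_dist hT hp sp
    have h2 := sd_dist hT hq sq
    have h3 := tri hT u v q
    omega
  obtain ⟨r, hr, sr⟩ := sd_exists hT hmx
  have hrd := sd_dist hT hr sr
  have hmu : u ≠ m := by
    rintro rfl
    obtain ⟨q, hq, sq⟩ := sd_exists hT huv.symm
    have : q = r := leaf_nbr hu hr.symm hq.symm
    subst this
    have h1 := sd_dist hT hq sq
    have h2 : T.dist u q = 1 := dist_eq_one_iff_adj.2 hq.symm
    have h4 := hmin q (by rw [T.dist_comm (u := u) (v := v)]; omega)
    omega
  have hmv : v ≠ m := by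
    rintro rfl
    obtain ⟨q, hq, sq⟩ := sd_exists hT huv
    have : q = r := leaf_nbr hv hr.symm hq.symm
    subst this
    have h1 := sd_dist hT hq sq
    have h2 : T.dist v q = 1 := dist_eq_one_iff_adj.2 hq.symm
    have h4 := hmin q (by omega)
    omega
  obtain ⟨p, hp, sp⟩ := sd_exists hT hmu
  obtain ⟨q, hq, sq⟩ := sd_exists hT hmv
  have h1 := sd_dist hT hp sp
  have h2 := sd_dist hT hq sq
  have hpq : q ≠ p := by
    rintro rfl
    have h3 := tri hT u v q
    omega
  have hrp : r ≠ p := by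
    rintro rfl
    have h3 := tri hT u v r
    have h4 := hT.dist_eq_dist_add_one_of_adj v hr
    have h5 := hmin r (by omega)
    omega
  have hrq : r ≠ q := by
    rintro rfl
    have h3 := tri hT u v r
    have h4 := hT.dist_eq_dist_add_one_of_adj u hr
    have h5 := hmin r (by omega)
    omega
  refine ⟨m, q, ?_, hq.symm, sd_other hT hp hq sp hpq, sq⟩
  have h3 := le_degree (T := T) (w := m) {p, q, r} (by
    intro y hy
    simp only [Finset.mem_insert, Finset.mem_singleton] at hy
    rcases hy with rfl | rfl | rfl
    · exact hp.symm
    · exact hq.symm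
    · exact hr.symm)
  rwa [Finset.card_eq_three.2 ⟨p, q, r, hpq.symm, hrp.symm, hrq.symm, rfl⟩] at h3

/-- `T` is a spanning tree of `G` with at least three leaves and with the minimum number of
leaves. -/
structure LMin [Fintype V] (G T : SimpleGraph V) : Prop where
  le : T ≤ G
  tree : T.IsTree
  three : 3 ≤ (leafSet T).card
  min : ∀ T' : SimpleGraph V, T' ≤ G → T'.IsTree → (leafSet T).card ≤ (leafSet T').card

lemma card_lt_of [Fintype V] {A B : Finset V} {v : V} (hv : v ∈ B) (h : A ⊆ B.erase v) :
    A.card < B.card :=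
  (Finset.card_le_card h).trans_lt (Finset.card_erase_lt_of_mem hv)

lemma card_le_of [Fintype V] {A B : Finset V} {v a : V} (hv : v ∈ B)
    (h : A ⊆ insert a (B.erase v)) : A.card ≤ B.card := by
  have h1 := Finset.card_le_card h
  have h2 := Finset.card_insert_le a (B.erase v)
  have h3 := Finset.card_erase_lt_of_mem hv
  omega

lemma LMin.of_le [Fintype V] {G T T' : SimpleGraph V} (h : LMin G T) (hle : T' ≤ G)
    (ht : T'.IsTree) (hc : (leafSet T').card ≤ (leafSet T).card) : LMin G T' :=
  ⟨hle, ht, h.three.trans (h.min _ hle ht), fun T'' h1 h2 => hc.trans (h.min T'' h1 h2)⟩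

variable [Fintype V] {G T : SimpleGraph V}

lemma LMin.deg_pos (h : LMin G T) (u : V) : 1 ≤ T.degree u := by
  have h3 := h.three
  obtain ⟨v, -, hv⟩ := Finset.exists_mem_ne (s := leafSet T) (by omega) u
  exact one_le_deg h.tree hv

/-- Leaves are pairwise non-adjacent. -/
lemma LMin.indep (h : LMin G T) {u v : V} (hu : T.degree u = 1) (hv : T.degree v = 1)
    (huv : u ≠ v) : ¬ G.Adj u v := by
  intro hadj
  have h3 := h.three
  have : ∃ x ∈ leafSet T, x ∉ ({u, v} : Finset V) :=
    Finset.exists_mem_notMem_of_card_lt_card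
      (lt_of_le_of_lt (Finset.card_le_two) (by omega))
  obtain ⟨x, hx, hx'⟩ := this
  simp only [Finset.mem_insert, Finset.mem_singleton, not_or] at hx'
  obtain ⟨m, q, hm, hmq, s1, s2⟩ := three_leaves h.tree hu hv (mem_leafSet.1 hx) huv
    (Ne.symm hx'.1) (Ne.symm hx'.2)
  have hle := h.min _ (swp_le h.le hadj) (swp_tree h.tree hmq s1 s2)
  have hsub : leafSet (swp T m q u v) ⊆ insert q (((leafSet T).erase u).erase v) := by
    intro z hz
    rw [mem_leafSet] at hz
    have hd := swp_degree h.tree hmq s1 s2 z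
    simp only [Finset.mem_insert, Finset.mem_erase, mem_leafSet]
    by_cases hzq : z = q
    · exact Or.inl hzq
    · right
      have hmu : u ≠ m := by rintro rfl; omega
      have hmv : v ≠ m := by rintro rfl; omega
      refine ⟨?_, ?_, ?_⟩
      · rintro rfl
        simp [hzq, hmv, huv.symm] at hd
        omega
      · rintro rfl
        simp [hzq, hmu, huv] at hd
        omega
      · have hp := h.deg_pos z
        split_ifs at hd with h1 h2 h2 <;> first | omega | (subst_vars; omega)
  have c1 := Finset.card_le_card hsub
  have c2 := Finset.card_insert_le q (((leafSet T).erase u).erase v)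
  have c3 : ((leafSet T).erase u).card = (leafSet T).card - 1 :=
    Finset.card_erase_of_mem (mem_leafSet.2 hu)
  have c4 : (((leafSet T).erase u).erase v).card = ((leafSet T).erase u).card - 1 :=
    Finset.card_erase_of_mem (Finset.mem_erase.2 ⟨huv.symm, mem_leafSet.2 hv⟩)
  omega

/-- `v` is a leaf on the `a`-side of the tree edge `a w`, adjacent in `G` to `w`. -/
structure Ob (G T : SimpleGraph V) (a w v : V) : Prop where
  leaf : T.degree v = 1
  adj : T.Adj a w
  side : Sd T a w v
  gadj : G.Adj v w

lemma Ob.ne_w {a w v : V} (o : Ob G T a w v) : v ≠ w := o.gadj.ne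

lemma Ob.sdw {a w v : V} (o : Ob G T a w v) : Sd T w a w := sd_self o.adj.symm

/-- the basic swap -/
lemma Ob.tree {a w v : V} (h : LMin G T) (o : Ob G T a w v) : (swp T a w v w).IsTree :=
  swp_tree h.tree o.adj o.side o.sdw

lemma Ob.le {a w v : V} (h : LMin G T) (o : Ob G T a w v) : swp T a w v w ≤ G :=
  swp_le h.le o.gadj

lemma Ob.deg {a w v : V} (h : LMin G T) (o : Ob G T a w v) (u : V) :
    (swp T a w v w).degree u + (if u = a then 1 else 0) =
      T.degree u + (if u = v then 1 else 0) := by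
  have := swp_degree h.tree o.adj o.side o.sdw u
  omega

/-- The near end of an obliquely seen edge is not a branch vertex. -/
lemma Ob.near {a w v : V} (h : LMin G T) (o : Ob G T a w v) : T.degree a ≤ 2 := by
  by_contra hc
  have hle := h.min _ (o.le h) (o.tree h)
  have hsub : leafSet (swp T a w v w) ⊆ (leafSet T).erase v := by
    intro z hz
    rw [mem_leafSet] at hz
    have hd := o.deg h z
    have hp := h.deg_pos z
    have hl := o.leaf
    rw [Finset.mem_erase, mem_leafSet]
    have hva : v ≠ a := by rintro rfl; omega
    split_ifs at hd with h1 h2 h2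
    · exact absurd (h2.symm.trans h1) hva
    · subst h1; omega
    · subst h2; omega
    · exact ⟨h2, by omega⟩
  have := card_lt_of (mem_leafSet.2 o.leaf) hsub
  omega

lemma Ob.lmin {a w v : V} (h : LMin G T) (o : Ob G T a w v) : LMin G (swp T a w v w) := by
  refine h.of_le (o.le h) (o.tree h) (card_le_of (mem_leafSet.2 o.leaf) (a := a) ?_)
  intro z hz
  rw [mem_leafSet] at hz
  have hd := o.deg h z
  have hp := h.deg_pos z
  have hl := o.leaf
  rw [Finset.mem_insert, Finset.mem_erase, mem_leafSet]
  split_ifs at hd with h1 h2 h2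
  · exact Or.inl h1
  · exact Or.inl h1
  · subst h2; omega
  · exact Or.inr ⟨h2, by omega⟩

lemma Ob.near_two {a w v : V} (h : LMin G T) (o : Ob G T a w v) (hne : v ≠ a) :
    T.degree a = 2 := by
  have h1 := o.near h
  have h2 := h.deg_pos a
  have h3 : T.degree a ≠ 1 := fun h3 => hne (leaf_side h.tree h3 o.adj o.side)
  omega

/-- No second leaf is adjacent to the near end. -/
lemma Ob.near_adj {a w v v' : V} (h : LMin G T) (o : Ob G T a w v) (hne : v ≠ a)
    (hv' : T.degree v' = 1) (hvv : v' ≠ v) : ¬ G.Adj v' a := by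
  have h2 := o.near_two h hne
  have hva : v' ≠ a := by rintro rfl; omega
  have d1 := o.deg h a
  have d2 := o.deg h v'
  simp only [if_true, hne.symm, if_false, hva, hvv] at d1 d2
  exact (o.lmin h).indep (by omega) (by omega) hva

/-- `T - a w + v w - w y + y a` decreases the degree of `w` and increases that of `v`. -/
lemma Ob.slide {a w v y : V} (h : LMin G T) (o : Ob G T a w v) (hy : T.Adj w y) (hya : y ≠ a)
    (hg : G.Adj y a) : ∃ T' : SimpleGraph V, T' ≤ G ∧ T'.IsTree ∧
      ∀ u, T'.degree u + (if u = w then 1 else 0) = T.degree u + (if u = v then 1 else 0) := by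
  have h1 := o.tree h
  have hvy : y ≠ v := by
    rintro rfl
    have := sd_other h.tree o.adj hy.symm o.side hya
    exact sd_not this (sd_self hy.symm)
  have hwv : (swp T a w v w).Adj v w := swp_adj_new o.ne_w
  have hwy : (swp T a w v w).Adj y w := by
    rw [swp_adj]; left
    refine ⟨hy.symm, ?_⟩
    rw [ne_eq, Sym2.eq_iff]
    have := o.adj.ne
    grind
  have hs : Sd (swp T a w v w) v w a := swp_sd h.tree o.adj o.side o.sdw (sd_self o.adj)
  have hs' : Sd (swp T a w v w) w y a := sd_other h1 hwv hwy hs hvy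
  refine ⟨swp (swp T a w v w) y w y a, swp_le (o.le h) hg,
    swp_tree h1 hwy (sd_self hwy) hs', fun u => ?_⟩
  have d1 := o.deg h u
  have d2 := swp_degree h1 hwy (sd_self hwy) hs' u
  omega

/-- each edge is seen by at most one leaf from a given side -/
lemma Ob.unique {a w v v' : V} (hK : K14Free G) (h : LMin G T) (o : Ob G T a w v)
    (o' : Ob G T a w v') : v = v' := by
  by_contra hvv
  have hva : v ≠ a := by
    rintro rfl
    exact hvv (leaf_side h.tree o.leaf o.adj o'.side).symm
  have hva' : v' ≠ a := by
    rintro rfl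
    exact hvv (leaf_side h.tree o'.leaf o.adj o.side)
  have n1 := o.near_adj h hva o'.leaf (Ne.symm hvv)
  have n2 := o'.near_adj h hva' o.leaf hvv
  have hw : 2 ≤ T.degree w := by
    have := h.deg_pos w
    have h1 : T.degree w ≠ 1 := fun h1 => h.indep o.leaf h1 o.ne_w o.gadj
    omega
  obtain ⟨y, hy, hya⟩ := exists_other (T := T) (w := w) {a} (by rw [Finset.card_singleton]; omega)
  rw [Finset.mem_singleton] at hya
  have key : ∀ x x', Ob G T a w x → Ob G T a w x' → x ≠ x' → ¬ G.Adj x y := by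
    intro x x' ox ox' hxx hxy
    have ob : Ob G T w y x := ⟨ox.leaf, hy, sd_other h.tree ox.adj hy.symm ox.side hya, hxy⟩
    exact ob.near_adj h ox.ne_w ox'.leaf hxx.symm ox'.gadj
  have yne : ∀ x, Ob G T a w x → y ≠ x := by
    rintro x ox rfl
    exact sd_not (sd_other h.tree o.adj hy.symm ox.side hya) (sd_self hy.symm)
  have hay : ¬ G.Adj y a := by
    intro hg
    obtain ⟨T', hle, ht, hd⟩ := o.slide h hy hya hg
    have hsub : leafSet T' ⊆ insert w ((leafSet T).erase v) := by
      intro z hz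
      rw [mem_leafSet] at hz
      have hd := hd z
      have hp := h.deg_pos z
      have hl := o.leaf
      rw [Finset.mem_insert, Finset.mem_erase, mem_leafSet]
      split_ifs at hd with h1 h2 h2
      · exact Or.inl h1
      · exact Or.inl h1
      · subst h2; omega
      · exact Or.inr ⟨h2, by omega⟩
    have h' := h.of_le hle ht (card_le_of (mem_leafSet.2 o.leaf) hsub)
    have hww := hd w
    simp only [if_true, o.ne_w.symm, if_false] at hww
    have hw' := hd v'
    simp only [o'.ne_w, Ne.symm hvv, if_false] at hw'
    have hl' := o'.leaf
    by_cases h2 : T.degree w = 2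
    · exact h'.indep (by omega) (by omega) o'.ne_w o'.gadj
    · have hsub2 : leafSet T' ⊆ (leafSet T).erase v := by
        intro z hz
        have := hsub hz
        rw [Finset.mem_insert] at this
        rcases this with rfl | this
        · rw [mem_leafSet] at hz; omega
        · exact this
      have := card_lt_of (mem_leafSet.2 o.leaf) hsub2
      have := h.min _ hle ht
      omega
  apply hK
  refine ⟨w, v, v', a, y, hvv, hva, (yne v o).symm, hva', (yne v' o').symm, Ne.symm hya,
    o.gadj.symm, o'.gadj.symm, h.le o.adj.symm, h.le hy, h.indep o.leaf o'.leaf hvv, n2,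
    key v v' o o' hvv, n1, key v' v o' o (Ne.symm hvv), fun hh => hay hh.symm⟩

/-- an edge is not seen from both sides -/
lemma Ob.one_side {a w v v' : V} (h : LMin G T) (o : Ob G T a w v) (o' : Ob G T w a v') : False := by
  have hne : v' ≠ v := by
    rintro rfl; exact sd_not o.side o'.side
  by_cases hva : v = a
  · subst hva
    exact h.indep o'.leaf o.leaf hne o'.gadj
  · exact o.near_adj h hva o'.leaf hne o'.gadj

/-! ### Branch vertices that are seen by a leaf -/

lemma Ob.ne_side {a w v c : V} (h : LMin G T) (o : Ob G T a w v) (hc : 3 ≤ T.degree c)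
    (hs : Sd T a w c) : v ≠ a := by
  rintro rfl
  have := leaf_side h.tree o.leaf o.adj hs
  subst this
  have := o.leaf
  omega

lemma Ob.other_near {a w v y : V} (h : LMin G T) (o : Ob G T a w v) (hw : 3 ≤ T.degree w)
    (hy : T.Adj w y) (hya : y ≠ a) : ¬ G.Adj y a := by
  intro hg
  obtain ⟨T', hle, ht, hd⟩ := o.slide h hy hya hg
  have hsub : leafSet T' ⊆ (leafSet T).erase v := by
    intro z hz
    rw [mem_leafSet] at hz
    have hd := hd z
    have hp := h.deg_pos z
    have hl := o.leaf
    rw [Finset.mem_erase, mem_leafSet]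
    split_ifs at hd with h1 h2 h2
    · exact absurd (h2.symm.trans h1) o.ne_w
    · subst h1; omega
    · subst h2; omega
    · exact ⟨h2, by omega⟩
  have := card_lt_of (mem_leafSet.2 o.leaf) hsub
  have := h.min _ hle ht
  omega

lemma Ob.other_leaf {a w v y : V} (h : LMin G T) (o : Ob G T a w v) (hw : 3 ≤ T.degree w)
    (hy : T.Adj w y) (hya : y ≠ a) : ¬ G.Adj v y := by
  intro hg
  have ob : Ob G T w y v := ⟨o.leaf, hy, sd_other h.tree o.adj hy.symm o.side hya, hg⟩
  have := ob.near h
  omega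

lemma Ob.other_ne {a w v y : V} (h : LMin G T) (o : Ob G T a w v)
    (hy : T.Adj w y) (hya : y ≠ a) : v ≠ y := by
  rintro rfl
  exact sd_not (sd_other h.tree o.adj hy.symm o.side hya) (sd_self hy.symm)

/-- the other neighbours of a seen branch vertex form a clique -/
lemma Ob.clique {a w v y z : V} (hK : K14Free G) (h : LMin G T) (o : Ob G T a w v)
    (hw : 3 ≤ T.degree w) (hva : v ≠ a) (hn : ¬ G.Adj v a)
    (hy : T.Adj w y) (hya : y ≠ a) (hz : T.Adj w z) (hza : z ≠ a) (hyz : y ≠ z) : G.Adj y z := by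
  by_contra hc
  apply hK
  exact ⟨w, v, a, y, z, hva, o.other_ne h hy hya, o.other_ne h hz hza, hya.symm, hza.symm, hyz,
    o.gadj.symm, h.le o.adj.symm, h.le hy, h.le hz, hn, o.other_leaf h hw hy hya,
    o.other_leaf h hw hz hza, fun e => o.other_near h hw hy hya e.symm,
    fun e => o.other_near h hw hz hza e.symm, hc⟩

/-- no other edge at a seen branch vertex is seen -/
lemma Ob.others {a w v y v' : V} (hK : K14Free G) (h : LMin G T) (o : Ob G T a w v)
    (hw : 3 ≤ T.degree w) (hva : v ≠ a) (hn : ¬ G.Adj v a)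
    (hya : y ≠ a) : ¬ Ob G T y w v' := by
  intro o'
  have hvv : v ≠ v' := by
    rintro rfl
    exact hya (sd_unique h.tree o'.adj o.adj o'.side o.side)
  obtain ⟨z, hz, hz'⟩ := exists_other (T := T) (w := w) {a, y}
    (lt_of_le_of_lt Finset.card_le_two (by omega))
  simp only [Finset.mem_insert, Finset.mem_singleton, not_or] at hz'
  apply hK
  exact ⟨w, v, v', a, z, hvv, hva, o.other_ne h hz hz'.1, o'.other_ne h o.adj.symm hya.symm,
    o'.other_ne h hz hz'.2, Ne.symm hz'.1, o.gadj.symm, o'.gadj.symm, h.le o.adj.symm, h.le hz,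
    h.indep o.leaf o'.leaf hvv, hn, o.other_leaf h hw hz hz'.1,
    o'.other_leaf h hw o.adj.symm hya.symm, o'.other_leaf h hw hz hz'.2,
    fun e => o.other_near h hw hz hz'.1 e.symm⟩

/-- merging a branch vertex into an adjacent one -/
lemma shift (n : ℕ) : ∀ (T : SimpleGraph V) (w a y : V), T ≤ G → T.IsTree → T.degree w = n + 3 →
    T.Adj w a → T.Adj w y → a ≠ y → 3 ≤ T.degree y →
    (∀ z, T.Adj w z → z ≠ a → z ≠ y → G.Adj z y) →
    ∃ T' : SimpleGraph V, T' ≤ G ∧ T'.IsTree ∧ (leafSet T').card ≤ (leafSet T).card ∧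
      (branchSet T').card < (branchSet T).card := by
  induction n with
  | zero =>
    intro T w a y hle ht hw ha hy hay hdy hcl
    obtain ⟨z, hz, hz'⟩ := exists_other (T := T) (w := w) {a, y}
      (lt_of_le_of_lt Finset.card_le_two (by omega))
    simp only [Finset.mem_insert, Finset.mem_singleton, not_or] at hz'
    have s1 : Sd T w z y := sd_other ht hy.symm hz.symm (sd_self hy.symm) hz'.2
    have s2 : Sd T z w z := sd_self hz.symm
    have hd := swp_degree ht hz s1 s2
    refine ⟨swp T w z y z, swp_le hle (hcl z hz hz'.1 hz'.2).symm, swp_tree ht hz s1 s2,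
      Finset.card_le_card ?_, card_lt_of (v := w) (mem_branchSet.2 (by omega)) ?_⟩
    · intro u hu
      rw [mem_leafSet] at hu ⊢
      have := hd u
      by_cases h1 : u = w
      · subst h1; simp only [if_true] at this; split_ifs at this <;> omega
      · by_cases h2 : u = y
        · subst h2; simp only [if_true, h1, if_false] at this; omega
        · simp only [h1, h2, if_false] at this; omega
    · intro u hu
      rw [mem_branchSet] at hu
      rw [Finset.mem_erase, mem_branchSet]
      have := hd u
      by_cases h1 : u = w
      · subst h1
        simp only [if_true, hy.ne, if_false] at this
        omega
      · refine ⟨h1, ?_⟩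
        by_cases h2 : u = y
        · subst h2; omega
        · simp only [h1, h2, if_false] at this; omega
  | succ n ih =>
    intro T w a y hle ht hw ha hy hay hdy hcl
    obtain ⟨z, hz, hz'⟩ := exists_other (T := T) (w := w) {a, y}
      (lt_of_le_of_lt Finset.card_le_two (by omega))
    simp only [Finset.mem_insert, Finset.mem_singleton, not_or] at hz'
    have s1 : Sd T w z y := sd_other ht hy.symm hz.symm (sd_self hy.symm) hz'.2
    have s2 : Sd T z w z := sd_self hz.symm
    have hd := swp_degree ht hz s1 s2
    have hadj : ∀ u, (swp T w z y z).Adj w u ↔ T.Adj w u ∧ u ≠ z := by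
      intro u
      rw [swp_adj]
      have := hy.ne
      have := hz.ne
      simp only [ne_eq, Sym2.eq_iff]
      grind
    have hdw := hd w
    have hdyy := hd y
    simp only [if_true, hy.ne, hy.ne.symm, hz.ne, if_false] at hdw hdyy
    obtain ⟨T', h1, h2, h3, h4⟩ := ih (swp T w z y z) w a y
      (swp_le hle (hcl z hz hz'.1 hz'.2).symm) (swp_tree ht hz s1 s2) (by omega)
      ((hadj a).2 ⟨ha, Ne.symm hz'.1⟩) ((hadj y).2 ⟨hy, Ne.symm hz'.2⟩) hay (by omega)
      (fun u hu => hcl u ((hadj u).1 hu).1)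
    refine ⟨T', h1, h2, h3.trans (Finset.card_le_card ?_), h4.trans_le (Finset.card_le_card ?_)⟩
    · intro u hu
      rw [mem_leafSet] at hu ⊢
      have := hd u
      by_cases h1 : u = w
      · subst h1; omega
      · by_cases h2 : u = y
        · subst h2; simp only [if_true, h1, if_false] at this; omega
        · simp only [h1, h2, if_false] at this; omega
    · intro u hu
      rw [mem_branchSet] at hu ⊢
      have := hd u
      by_cases h1 : u = w
      · subst h1; omega
      · by_cases h2 : u = y
        · subst h2; omega
        · simp only [h1, h2, if_false] at this; omega

/-- total distance between branch vertices -/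
noncomputable def spread (T : SimpleGraph V) : ℕ :=
  ∑ p ∈ branchSet T ×ˢ branchSet T, T.dist p.1 p.2

structure Opt (G T : SimpleGraph V) : Prop where
  lmin : LMin G T
  minB : ∀ T', LMin G T' → (branchSet T).card ≤ (branchSet T').card
  maxD : ∀ T', LMin G T' → (branchSet T').card = (branchSet T).card → spread T' ≤ spread T

lemma lip {T : SimpleGraph V} (hT : T.IsTree) (f : V → ℕ)
    (hf : ∀ p q, T.Adj p q → f q ≤ f p + 1) (x y : V) : f y ≤ f x + T.dist x y := by
  obtain ⟨p, hp⟩ := hT.connected.exists_walk_length_eq_dist x y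
  rw [← hp]
  clear hp
  induction p with
  | nil => simp
  | cons hadj p ih =>
    have := hf _ _ hadj
    rw [Walk.length_cons]
    omega

lemma Ob.subdiv {a w v c : V} (h : Opt G T) (o : Ob G T a w v) (hw : 3 ≤ T.degree w)
    (hc : 3 ≤ T.degree c) (hs : Sd T a w c) : ¬ G.Adj v a := by
  intro hg
  have hm := h.lmin
  have ht := hm.tree
  have hva := o.ne_side hm hc hs
  have ha2 := o.near_two hm hva
  have hl := o.leaf
  obtain ⟨s, hsv, sds⟩ := sd_exists ht hva.symm
  have hsa : s ≠ a := by
    rintro rfl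
    have hcs : c ≠ s := by rintro rfl; omega
    obtain ⟨b, hb, sb⟩ := sd_exists ht hcs
    have hbw : b ≠ w := by
      rintro rfl
      exact sd_not hs sb
    have hbv : b = v := by
      by_contra hbv
      have h3 := le_degree (T := T) (w := s) {b, v, w} (by
        intro y hy
        simp only [Finset.mem_insert, Finset.mem_singleton] at hy
        rcases hy with rfl | rfl | rfl
        · exact hb.symm
        · exact hsv
        · exact o.adj)
      rw [Finset.card_eq_three.2 ⟨b, v, w, hbv, hbw, o.ne_w, rfl⟩] at h3
      omega
    subst hbv
    have := leaf_side ht hl hb sb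
    subst this
    omega
  have hsw : s ≠ w := by
    rintro rfl
    have := sd_adj ht o.adj hsv.symm (by
      rw [ne_eq, Sym2.eq_iff]
      have := o.adj.ne
      grind) o.side
    exact sd_not this (sd_self o.adj.symm)
  have ht1 := o.tree hm
  have hsv1 : (swp T a w v w).Adj s v := by
    rw [swp_adj]; left
    refine ⟨hsv, ?_⟩
    rw [ne_eq, Sym2.eq_iff]
    grind
  have sd1 : Sd (swp T a w v w) s v a := by
    obtain ⟨r, hr, sr⟩ := sd_exists ht1 hva.symm
    have hsw' : Sd (swp T a w v w) v w a := swp_sd ht o.adj o.side o.sdw (sd_self o.adj)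
    have hrw : r ≠ w := by
      rintro rfl
      exact sd_not hsw' sr
    have : r = s := by
      rw [swp_adj] at hr
      rcases hr with hr | ⟨-, hr | hr⟩
      · exact leaf_nbr hl hsv.symm hr.1.symm
      · exact absurd hr.2 o.ne_w
      · exact absurd hr.1 hrw
    rwa [this] at sr
  have sd2 : Sd (swp T a w v w) v s v := sd_self hsv1.symm
  have ht2 := swp_tree ht1 hsv1 sd1 sd2
  have hle2 : swp (swp T a w v w) s v a v ≤ G := swp_le (o.le hm) hg.symm
  have hd : ∀ u, (swp (swp T a w v w) s v a v).degree u + (if u = s then 1 else 0) =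
      T.degree u + (if u = v then 1 else 0) := by
    intro u
    have d1 := o.deg hm u
    have d2 := swp_degree ht1 hsv1 sd1 sd2 u
    omega
  have hadj : ∀ p q, (swp (swp T a w v w) s v a v).Adj p q →
      (T.Adj p q ∧ p ≠ v ∧ q ≠ v ∧ s(p, q) ≠ s(a, w)) ∨ (p = v ∧ q = w) ∨ (p = w ∧ q = v) ∨
      (p = a ∧ q = v) ∨ (p = v ∧ q = a) := by
    intro p q hpq
    rw [swp_adj, swp_adj] at hpq
    rcases hpq with ⟨⟨h1, h2⟩ | ⟨-, h1⟩, h3⟩ | ⟨-, h1⟩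
    · left
      refine ⟨h1, ?_, ?_, h2⟩
      · rintro rfl
        have := leaf_nbr hl hsv.symm h1
        subst this
        exact h3 Sym2.eq_swap
      · rintro rfl
        have := leaf_nbr hl hsv.symm h1.symm
        subst this
        exact h3 rfl
    · tauto
    · tauto
  generalize hT' : swp (swp T a w v w) s v a v = T' at *
  have hs2 : 2 ≤ T.degree s := by
    have h1 := hm.deg_pos s
    have h2 : T.degree s ≠ 1 := fun h2 => hm.indep h2 hl hsv.ne (hm.le hsv)
    omega
  have hsub : leafSet T' ⊆ insert s ((leafSet T).erase v) := by
    intro z hz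
    rw [mem_leafSet] at hz
    have hd := hd z
    have hp := hm.deg_pos z
    rw [Finset.mem_insert, Finset.mem_erase, mem_leafSet]
    split_ifs at hd with h1 h2 h2
    · exact Or.inl h1
    · exact Or.inl h1
    · subst h2; omega
    · exact Or.inr ⟨h2, by omega⟩
  have hm' := hm.of_le hle2 ht2 (card_le_of (mem_leafSet.2 hl) hsub)
  have hdv := hd v
  have hds := hd s
  simp only [if_true, hsv.ne, hsv.ne.symm, if_false] at hdv hds
  have hs2' : T.degree s = 2 := by
    by_contra hs3
    have hsub2 : leafSet T' ⊆ (leafSet T).erase v := by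
      intro z hz
      have := hsub hz
      rw [Finset.mem_insert] at this
      rcases this with rfl | this
      · rw [mem_leafSet] at hz; omega
      · exact this
    have := card_lt_of (mem_leafSet.2 hl) hsub2
    have := hm.min _ hle2 ht2
    omega
  have hB : branchSet T' = branchSet T := by
    ext u
    rw [mem_branchSet, mem_branchSet]
    have := hd u
    by_cases h1 : u = s
    · subst h1; omega
    · by_cases h2 : u = v
      · subst h2; omega
      · simp only [h1, h2, if_false] at this; omega
  have hD := h.maxD T' hm' (by rw [hB])
  have hlt : spread T < spread T' := by
    unfold spread
    rw [hB]
    have hwa : T.dist w a = 1 := dist_eq_one_iff_adj.2 o.adj.symm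
    apply Finset.sum_lt_sum
    · rintro ⟨b1, b2⟩ hb
      rw [Finset.mem_product, mem_branchSet, mem_branchSet] at hb
      have hb1 : b1 ≠ v := by rintro rfl; simp only at hb; omega
      have hb2 : b2 ≠ v := by rintro rfl; simp only at hb; omega
      have key := lip ht2 (fun u => T.dist b1 (if u = v then w else u)) (by
        intro p q hpq
        have htri : ∀ x y, T.Adj x y → T.dist b1 y ≤ T.dist b1 x + 1 := by
          intro x y hxy
          have := ht.dist_eq_dist_add_one_of_adj b1 hxy
          omega
        rcases hadj p q hpq with ⟨h1, h2, h3, -⟩ | ⟨rfl, rfl⟩ | ⟨rfl, rfl⟩ | ⟨rfl, rfl⟩ | ⟨rfl, rfl⟩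
        · simp only [h2, h3, if_false]; exact htri _ _ h1
        · simp
        · simp
        · simp only [hva.symm, if_true, if_false]; exact htri _ _ o.adj
        · simp only [hva.symm, if_true, if_false]; exact htri _ _ o.adj.symm) b1 b2
      simp only [hb1, hb2, if_false, dist_self, zero_add] at key
      exact key
    · refine ⟨(w, c), ?_, ?_⟩
      · rw [Finset.mem_product, mem_branchSet, mem_branchSet]; exact ⟨hw, hc⟩
      · have hcv : c ≠ v := by rintro rfl; omega
        have key := lip ht2 (fun u => T.dist w (if u = v then w else u) +
            (if Sd T a w u then 1 else 0)) (by
          intro p q hpq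
          have htri : ∀ x y, T.Adj x y → T.dist w y ≤ T.dist w x + 1 := by
            intro x y hxy
            have := ht.dist_eq_dist_add_one_of_adj w hxy
            omega
          have e1 : Sd T a w v := o.side
          have e2 : ¬ Sd T a w w := sd_not (sd_self o.adj.symm)
          have e3 : Sd T a w a := sd_self o.adj
          have e4 := o.ne_w
          rcases hadj p q hpq with ⟨h1, h2, h3, h4⟩ | ⟨rfl, rfl⟩ | ⟨rfl, rfl⟩ | ⟨rfl, rfl⟩ | ⟨rfl, rfl⟩
          · have h5 : Sd T a w p ↔ Sd T a w q :=
              ⟨sd_adj ht o.adj h1 h4, sd_adj ht o.adj h1.symm (by rwa [Sym2.eq_swap] at h4)⟩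
            have := htri _ _ h1
            simp only [h2, h3, h5, if_false]
            omega
          · simp [e2]
          · simp only [e1, e2, if_true, if_false, e4.symm]; omega
          · simp only [e1, e3, if_true, hva.symm, if_false, dist_self]; omega
          · simp only [e1, e3, if_true, hva.symm, if_false, dist_self]; omega) w c
        have e2 : ¬ Sd T a w w := sd_not (sd_self o.adj.symm)
        simp only [o.ne_w.symm, hcv, hs, e2, if_true, if_false, dist_self] at key
        simp only
        omega
  omega

/-! ### Counting -/

lemma Opt.count (hK : K14Free G) (h : Opt G T) (S : Finset V) (hS : S ⊆ leafSet T) :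
    ∑ v ∈ S, G.degree v + (leafSet T \ S).card + (branchSet T).card ≤ Fintype.card V := by
  have hm := h.lmin
  have ht := hm.tree
  -- a root
  obtain ⟨c₀, hc₀⟩ : ∃ c, 3 ≤ T.degree c := by
    obtain ⟨x, hx, y, hy, z, hz, h1, h2, h3⟩ := Finset.two_lt_card.1 (show 2 < (leafSet T).card from hm.three)
    obtain ⟨m, q, hmq, -⟩ := three_leaves ht (mem_leafSet.1 hx) (mem_leafSet.1 hy)
      (mem_leafSet.1 hz) h1 h2 h3
    exact ⟨m, hmq⟩
  have hpar : ∀ u : V, ∃ p, c₀ ≠ u → T.Adj p u ∧ Sd T p u c₀ := by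
    intro u
    by_cases hu : c₀ = u
    · exact ⟨u, fun h => absurd hu h⟩
    · obtain ⟨p, hp⟩ := sd_exists ht hu
      exact ⟨p, fun _ => hp⟩
  choose par hpar using hpar
  have hparu : ∀ p u, T.Adj p u → Sd T p u c₀ → c₀ ≠ u ∧ p = par u := by
    intro p u h1 h2
    have hne : c₀ ≠ u := by
      rintro rfl
      simp [Sd] at h2
    exact ⟨hne, sd_unique ht h1 (hpar u hne).1 h2 (hpar u hne).2⟩
  -- pairs (leaf, neighbour) are mapped to edges
  have hΦ : ∀ p : (_ : V) × V, ∃ c, p.1 ∈ S → G.Adj p.1 p.2 → c₀ ≠ c ∧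
      ((p.2 = c ∧ Ob G T (par c) c p.1) ∨ (p.2 = par c ∧ Ob G T c (par c) p.1)) := by
    rintro ⟨v, u⟩
    by_cases hv : v ∈ S ∧ G.Adj v u
    · obtain ⟨hv, hvu⟩ := hv
      obtain ⟨a, ha, sa⟩ := sd_exists ht hvu.ne
      have o : Ob G T a u v := ⟨mem_leafSet.1 (hS hv), ha, sa, hvu⟩
      rcases sd_or ht ha c₀ with h1 | h1
      · obtain ⟨h2, rfl⟩ := hparu _ _ ha h1
        exact ⟨u, fun _ _ => ⟨h2, Or.inl ⟨rfl, o⟩⟩⟩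
      · obtain ⟨h2, rfl⟩ := hparu _ _ ha.symm h1
        exact ⟨a, fun _ _ => ⟨h2, Or.inr ⟨rfl, o⟩⟩⟩
    · exact ⟨v, fun h1 h2 => absurd ⟨h1, h2⟩ hv⟩
  choose Φ hΦ using hΦ
  -- branch vertices are mapped to unseen edges
  have hΨ : ∀ w, ∃ c, 3 ≤ T.degree w → c₀ ≠ w → c₀ ≠ c ∧
      (∀ v, ¬ Ob G T (par c) c v ∧ ¬ Ob G T c (par c) v) ∧
      (c = w ∨ (T.degree c = 2 ∧ par c = w)) := by
    intro w
    by_cases hw : 3 ≤ T.degree w ∧ c₀ ≠ w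
    swap
    · exact ⟨w, fun h1 h2 => absurd ⟨h1, h2⟩ hw⟩
    obtain ⟨hw, hwc⟩ := hw
    have hfar : ∀ a v, ¬ Ob G T w a v := by
      intro a v o
      have := o.near hm
      omega
    by_cases hex : ∃ v, Ob G T (par w) w v
    swap
    · exact ⟨w, fun _ _ => ⟨hwc, fun v => ⟨fun o => hex ⟨v, o⟩, hfar _ v⟩, Or.inl rfl⟩⟩
    obtain ⟨v, o⟩ := hex
    have hp := hpar w hwc
    have hva := o.ne_side hm hc₀ hp.2
    have hn := o.subdiv h hw hc₀ hp.2
    obtain ⟨y, hy, hya, hyd⟩ : ∃ y, T.Adj w y ∧ y ≠ par w ∧ T.degree y < 3 := by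
      by_contra hcon
      push Not at hcon
      obtain ⟨y, hy, hya⟩ := exists_other (T := T) (w := w) {par w}
        (by rw [Finset.card_singleton]; omega)
      rw [Finset.mem_singleton] at hya
      obtain ⟨T', h1, h2, h3, h4⟩ := shift (G := G) (T.degree w - 3) T w (par w) y hm.le ht
        (by omega) o.adj.symm hy (Ne.symm hya) (hcon y hy hya)
        (fun z hz hza hzy => o.clique hK hm hw hva hn hz hza hy hya hzy)
      have := h.minB T' (hm.of_le h1 h2 h3)
      omega
    have hno : ∀ v', ¬ Ob G T y w v' := fun v' => o.others hK hm hw hva hn hya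
    have hy1 : T.degree y ≠ 1 := fun h1 =>
      hno y ⟨h1, hy.symm, sd_self hy.symm, hm.le hy.symm⟩
    have hy0 := hm.deg_pos y
    obtain ⟨hyc, hyp⟩ := hparu w y hy (sd_other ht hp.1 hy.symm hp.2 hya)
    refine ⟨y, fun _ _ => ⟨hyc, fun v' => ?_, Or.inr ⟨by omega, hyp.symm⟩⟩⟩
    rw [← hyp]
    exact ⟨hfar y v', hno v'⟩
  choose Ψ hΨ using hΨ
  -- the three sets of edges (named by their lower ends)
  have c1 : ((S.sigma fun v => G.neighborFinset v).image Φ).card = ∑ v ∈ S, G.degree v := by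
    rw [Finset.card_image_of_injOn, Finset.card_sigma]
    · simp
    · rintro ⟨v, u⟩ h1 ⟨v', u'⟩ h2 heq
      simp only [Finset.coe_sigma, Set.mem_sigma_iff, Finset.mem_coe, mem_neighborFinset] at h1 h2
      have f1 := hΦ ⟨v, u⟩ h1.1 h1.2
      have f2 := hΦ ⟨v', u'⟩ h2.1 h2.2
      rw [← heq] at f2
      rcases f1.2 with ⟨e1, o1⟩ | ⟨e1, o1⟩ <;> rcases f2.2 with ⟨e2, o2⟩ | ⟨e2, o2⟩
      · have := o1.unique hK hm o2
        simp only at this e1 e2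
        rw [this, e1, e2]
      · exact (o1.one_side hm o2).elim
      · exact (o1.one_side hm o2).elim
      · have := o1.unique hK hm o2
        simp only at this e1 e2
        rw [this, e1, e2]
  have c2 : (((branchSet T).erase c₀).image Ψ).card = (branchSet T).card - 1 := by
    rw [Finset.card_image_of_injOn, Finset.card_erase_of_mem (mem_branchSet.2 hc₀)]
    intro w hw w' hw' heq
    simp only [Finset.coe_erase, Set.mem_diff, Finset.mem_coe, mem_branchSet,
      Set.mem_singleton_iff] at hw hw'
    have f1 := (hΨ w hw.1 (Ne.symm hw.2)).2.2
    have f2 := (hΨ w' hw'.1 (Ne.symm hw'.2)).2.2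
    rw [← heq] at f2
    rcases f1 with e1 | ⟨e1, e1'⟩ <;> rcases f2 with e2 | ⟨e2, e2'⟩
    · rw [← e1, ← e2]
    · rw [e1] at e2; omega
    · rw [e2] at e1; omega
    · rw [← e1', ← e2']
  have d1 : Disjoint ((S.sigma fun v => G.neighborFinset v).image Φ) (leafSet T \ S) := by
    rw [Finset.disjoint_left]
    intro x hx hx'
    rw [Finset.mem_sdiff, mem_leafSet] at hx'
    obtain ⟨⟨v, u⟩, hvu, rfl⟩ := Finset.mem_image.1 hx
    simp only [Finset.mem_sigma, mem_neighborFinset] at hvu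
    have f1 := hΦ ⟨v, u⟩ hvu.1 hvu.2
    rcases f1.2 with ⟨e1, o1⟩ | ⟨e1, o1⟩
    · exact hm.indep o1.leaf hx'.1 o1.ne_w o1.gadj
    · have := leaf_side ht hx'.1 o1.adj o1.side
      exact hx'.2 (this ▸ hvu.1)
  have d2 : Disjoint ((S.sigma fun v => G.neighborFinset v).image Φ ∪ (leafSet T \ S))
      (((branchSet T).erase c₀).image Ψ) := by
    rw [Finset.disjoint_left]
    intro x hx hx'
    obtain ⟨w, hw, rfl⟩ := Finset.mem_image.1 hx'
    rw [Finset.mem_erase, mem_branchSet] at hw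
    obtain ⟨g1, g2, g3⟩ := hΨ w hw.2 (Ne.symm hw.1)
    rw [Finset.mem_union] at hx
    rcases hx with hx | hx
    · obtain ⟨⟨v, u⟩, hvu, he⟩ := Finset.mem_image.1 hx
      simp only [Finset.mem_sigma, mem_neighborFinset] at hvu
      have f1 := hΦ ⟨v, u⟩ hvu.1 hvu.2
      rw [he] at f1
      rcases f1.2 with ⟨e1, o1⟩ | ⟨e1, o1⟩
      · exact (g2 _).1 o1
      · exact (g2 _).2 o1
    · rw [Finset.mem_sdiff, mem_leafSet] at hx
      rcases g3 with g3 | g3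
      · rw [g3] at hx; omega
      · omega
  have hsub : ((S.sigma fun v => G.neighborFinset v).image Φ ∪ (leafSet T \ S)) ∪
      (((branchSet T).erase c₀).image Ψ) ⊆ Finset.univ.erase c₀ := by
    intro x hx
    rw [Finset.mem_erase]
    refine ⟨?_, Finset.mem_univ _⟩
    rw [Finset.mem_union, Finset.mem_union] at hx
    rcases hx with (hx | hx) | hx
    · obtain ⟨⟨v, u⟩, hvu, rfl⟩ := Finset.mem_image.1 hx
      simp only [Finset.mem_sigma, mem_neighborFinset] at hvu
      exact (hΦ ⟨v, u⟩ hvu.1 hvu.2).1.symm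
    · rw [Finset.mem_sdiff, mem_leafSet] at hx
      rintro rfl
      omega
    · obtain ⟨w, hw, rfl⟩ := Finset.mem_image.1 hx
      rw [Finset.mem_erase, mem_branchSet] at hw
      exact (hΨ w hw.2 (Ne.symm hw.1)).1.symm
  have hc := Finset.card_le_card hsub
  rw [Finset.card_union_of_disjoint d2, Finset.card_union_of_disjoint d1, c1, c2,
    Finset.card_erase_of_mem (Finset.mem_univ _), Finset.card_univ] at hc
  have hb : 0 < (branchSet T).card := Finset.card_pos.2 ⟨c₀, mem_branchSet.2 hc₀⟩
  have hv : 0 < Fintype.card V := Fintype.card_pos_iff.2 ⟨c₀⟩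
  omega

lemma handshake (hT : T.IsTree) (hd : ∀ u, 1 ≤ T.degree u) :
    (branchSet T).card + 2 ≤ (leafSet T).card := by
  have h1 := T.sum_degrees_eq_twice_card_edges
  have h2 := hT.card_edgeFinset
  have h3 : ∑ v : V, (2 + (if v ∈ branchSet T then 1 else 0)) ≤
      ∑ v : V, (T.degree v + (if v ∈ leafSet T then 1 else 0)) := by
    apply Finset.sum_le_sum
    intro v _
    have := hd v
    simp only [mem_branchSet, mem_leafSet]
    split_ifs <;> omega
  rw [Finset.sum_add_distrib, Finset.sum_add_distrib, h1] at h3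
  simp only [Finset.sum_const, Finset.card_univ, Finset.sum_ite_mem, Finset.univ_inter,
    smul_eq_mul, mul_one] at h3
  omega

end KFree

/-- If `m ≤ k+1` and `G` is a connected `K_{1,4}`-free graph of order `n` with
`σ_{m+2}(G) ≥ n - k`, then `G` has a spanning tree with at most `m+k+2` leaves and branch
vertices in total. -/
theorem stmt0 {V : Type*} [Fintype V] (k m : ℕ) (hm : m ≤ k + 1)
    (G : SimpleGraph V) (hG : G.Connected) (hK : K14Free G)
    (hσ : ∀ s : Finset V, IsIndepFinset G s → s.card = m + 2 →
      Fintype.card V - k ≤ ∑ v ∈ s, G.degree v) :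
    ∃ T : SimpleGraph V, T ≤ G ∧ T.IsTree ∧
      (leafSet T).card + (branchSet T).card ≤ m + k + 2 := by

  by_contra hcon
  push Not at hcon
  -- a spanning tree with few leaves, then few branch vertices, then large spread
  obtain ⟨T₀, hT₀, ht₀⟩ := hG.exists_isTree_le
  obtain ⟨T₁, hT₁, hmin₁⟩ := Finset.exists_min_image
    (Finset.univ.filter fun T : SimpleGraph V => T ≤ G ∧ T.IsTree)
    (fun T => (leafSet T).card) ⟨T₀, by simp [hT₀, ht₀]⟩
  simp only [Finset.mem_filter, Finset.mem_univ, true_and] at hT₁ hmin₁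
  have hdeg : ∀ T : SimpleGraph V, T ≤ G → T.IsTree → ∀ u, 1 ≤ T.degree u := by
    intro T hle ht u
    by_cases hex : ∃ v, v ≠ u
    · obtain ⟨v, hv⟩ := hex
      exact KFree.one_le_deg ht hv
    · push Not at hex
      exfalso
      have h0 : ∀ w, T.degree w = 0 := by
        intro w
        by_contra h0
        obtain ⟨z, hz⟩ := (T.degree_pos_iff_exists_adj w).1 (Nat.pos_of_ne_zero h0)
        exact hz.ne ((hex w).trans (hex z).symm)
      have h1 := hcon T hle ht
      simp [leafSet, branchSet, h0] at h1
  have hlarge : ∀ T : SimpleGraph V, T ≤ G → T.IsTree →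
      3 ≤ (leafSet T).card ∧ m + 2 ≤ (leafSet T).card := by
    intro T hle ht
    have h1 := hcon T hle ht
    have h2 := KFree.handshake ht (hdeg T hle ht)
    omega
  have hL₁ : KFree.LMin G T₁ := ⟨hT₁.1, hT₁.2, (hlarge T₁ hT₁.1 hT₁.2).1,
    fun T' h1 h2 => hmin₁ T' ⟨h1, h2⟩⟩
  obtain ⟨T₂, hT₂, hmin₂⟩ := Finset.exists_min_image
    (Finset.univ.filter fun T : SimpleGraph V => KFree.LMin G T)
    (fun T => (branchSet T).card) ⟨T₁, by simp [hL₁]⟩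
  simp only [Finset.mem_filter, Finset.mem_univ, true_and] at hT₂ hmin₂
  obtain ⟨T, hT, hmax⟩ := Finset.exists_max_image
    (Finset.univ.filter fun T : SimpleGraph V =>
      KFree.LMin G T ∧ (branchSet T).card = (branchSet T₂).card)
    (fun T => KFree.spread T) ⟨T₂, by simp [hT₂]⟩
  simp only [Finset.mem_filter, Finset.mem_univ, true_and] at hT hmax
  have hopt : KFree.Opt G T := ⟨hT.1, fun T' h' => hT.2 ▸ hmin₂ T' h',
    fun T' h' hc => hmax T' ⟨h', hc.trans hT.2⟩⟩
  have hl := hlarge T hT.1.le hT.1.tree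
  obtain ⟨S, hS, hSc⟩ := Finset.exists_subset_card_eq hl.2
  have hind : IsIndepFinset G S := fun u hu v hv huv =>
    hT.1.indep (KFree.mem_leafSet.1 (hS hu)) (KFree.mem_leafSet.1 (hS hv)) huv
  have h1 := hσ S hind hSc
  have h2 := hopt.count hK S hS
  have h3 := hcon T hT.1.le hT.1.tree
  rw [Finset.card_sdiff_of_subset hS, hSc] at h2
  omega
end

section
/- Let k be a positive integer and let G be a connected K_{1,4}-free simple graph of order n. If every pair of non-adjacent vertices of G has degree sum at least n−k, then G has a spanning tree T with |L(T)| + |B(T)| ≤ k+2, i.e., with at most k+2 leaves and branch vertices in total. -/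
open SimpleGraph Finset List

open scoped Classical

variable {V : Type*}

namespace SpanTree

/-- `T` with the edge `ac` deleted. -/
def del (T : SimpleGraph V) (a c : V) : SimpleGraph V := T.deleteEdges {s(a, c)}

/-- `T` with the edge `ac` replaced by `st`. -/
def sw (T : SimpleGraph V) (a c s t : V) : SimpleGraph V := del T a c ⊔ edge s t

theorem del_adj {T : SimpleGraph V} {a c x y : V} :
    (del T a c).Adj x y ↔ T.Adj x y ∧ ¬ ((x = a ∧ y = c) ∨ (x = c ∧ y = a)) := by
  simp [del]

theorem sw_adj {T : SimpleGraph V} {a c s t x y : V} :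
    (sw T a c s t).Adj x y ↔ (T.Adj x y ∧ ¬ ((x = a ∧ y = c) ∨ (x = c ∧ y = a))) ∨
      ((x = s ∧ y = t ∨ x = t ∧ y = s) ∧ x ≠ y) := by
  simp only [sw, SimpleGraph.sup_adj, del_adj, SimpleGraph.edge_adj]

theorem del_le (T : SimpleGraph V) (a c : V) : del T a c ≤ T := by
  intro x y h; exact (del_adj.1 h).1

theorem tree_not_reach {T : SimpleGraph V} (hT : T.IsTree) {a c : V} (h : T.Adj a c) :
    ¬ (del T a c).Reachable a c := by
  have := isAcyclic_iff_forall_adj_isBridge.1 hT.isAcyclic h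
  rwa [isBridge_iff] at this

theorem reach_split {T : SimpleGraph V} {a c : V} {x y : V} (p : T.Walk x y) :
    (del T a c).Reachable x y ∨ (del T a c).Reachable x a ∨ (del T a c).Reachable x c := by
  induction p with
  | nil => exact Or.inl (Reachable.refl _)
  | @cons x z y h p ih =>
    by_cases hx : x = a
    · subst hx; exact Or.inr (Or.inl (Reachable.refl _))
    by_cases hy : x = c
    · subst hy; exact Or.inr (Or.inr (Reachable.refl _))
    have h1 : (del T a c).Reachable x z := by
      apply Adj.reachable
      rw [del_adj]; exact ⟨h, by tauto⟩
    rcases ih with ih | ih | ih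
    · exact Or.inl (h1.trans ih)
    · exact Or.inr (Or.inl (h1.trans ih))
    · exact Or.inr (Or.inr (h1.trans ih))

theorem not_reach_st {T : SimpleGraph V} (hT : T.IsTree) {a c s t : V} (h : T.Adj a c)
    (hs : (del T a c).Reachable a s) (ht : (del T a c).Reachable c t) :
    ¬ (del T a c).Reachable s t := fun hst =>
  tree_not_reach hT h (hs.trans (hst.trans ht.symm))

theorem sw_tree {T : SimpleGraph V} (hT : T.IsTree) {a c s t : V} (h : T.Adj a c)
    (hs : (del T a c).Reachable a s) (ht : (del T a c).Reachable c t) :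
    (sw T a c s t).IsTree := by
  have hn := not_reach_st hT h hs ht
  have hst : s ≠ t := by rintro rfl; exact hn (Reachable.refl _)
  refine ⟨?_, ?_⟩
  · have hle : del T a c ≤ sw T a c s t := le_sup_left
    have hac : (sw T a c s t).Reachable a c := by
      refine (hs.mono hle).trans (Reachable.trans ?_ (ht.mono hle).symm)
      apply Adj.reachable; rw [sw_adj]; right; exact ⟨Or.inl ⟨rfl, rfl⟩, hst⟩
    have key : ∀ x, (sw T a c s t).Reachable x a := by
      intro x
      obtain ⟨p⟩ := hT.connected.preconnected x a
      rcases reach_split (a := a) (c := c) p with h | h | h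
      · exact h.mono hle
      · exact h.mono hle
      · exact (h.mono hle).trans hac.symm
    have := hT.connected.nonempty
    exact ⟨fun x y => (key x).trans (key y).symm⟩
  · exact IsAcyclic.sup_edge_of_not_reachable hn (hT.isAcyclic.anti (del_le T a c))

theorem sw_le {T G : SimpleGraph V} (hTG : T ≤ G) {a c s t : V} (h : G.Adj s t) :
    sw T a c s t ≤ G := by
  intro x y hxy
  rw [sw_adj] at hxy
  rcases hxy with hxy | ⟨⟨rfl, rfl⟩ | ⟨rfl, rfl⟩, _⟩
  · exact hTG hxy.1
  · exact h
  · exact h.symm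

/-- indicator -/
noncomputable def ind (z a : V) : ℕ := if z = a then 1 else 0

theorem sum_ind [Fintype V] (a : V) : ∑ z, ind z a = 1 := by
  simp [ind]

theorem del_deg [Fintype V] {T : SimpleGraph V} {a c : V} (h : T.Adj a c) (z : V) :
    (del T a c).degree z + ind z a + ind z c = T.degree z := by
  have hne := h.ne
  simp only [← card_neighborFinset_eq_degree]
  by_cases hz : z = a
  · subst hz
    have : (del T z c).neighborFinset z = (T.neighborFinset z).erase c := by
      ext x; simp only [mem_neighborFinset, del_adj, Finset.mem_erase]
      constructor
      · rintro ⟨h1, h2⟩; exact ⟨fun h => h2 (by tauto), h1⟩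
      · rintro ⟨h1, h2⟩; refine ⟨h2, ?_⟩; rintro (⟨_, h⟩ | ⟨h, _⟩); exacts [h1 h, hne h]
    rw [this, Finset.card_erase_of_mem (by simpa using h)]
    have h3 : 0 < (T.neighborFinset z).card := Finset.card_pos.2 ⟨c, by simpa using h⟩
    simp only [ind, if_true, if_neg hne]; omega
  · by_cases hz' : z = c
    · subst hz'
      have : (del T a z).neighborFinset z = (T.neighborFinset z).erase a := by
        ext x; simp only [mem_neighborFinset, del_adj, Finset.mem_erase]
        constructor
        · rintro ⟨h1, h2⟩; exact ⟨fun h => h2 (by tauto), h1⟩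
        · rintro ⟨h1, h2⟩; refine ⟨h2, ?_⟩; rintro (⟨h, _⟩ | ⟨_, h⟩); exacts [hz h, h1 h]
      rw [this, Finset.card_erase_of_mem (by simpa using h.symm)]
      have h3 : 0 < (T.neighborFinset z).card := Finset.card_pos.2 ⟨a, by simpa using h.symm⟩
      simp only [ind, if_true, if_neg hz]; omega
    · have : (del T a c).neighborFinset z = T.neighborFinset z := by
        ext x; simp only [mem_neighborFinset, del_adj]; tauto
      rw [this]; simp [ind, hz, hz']

theorem add_deg [Fintype V] {T H : SimpleGraph V} {s t : V} (hH : H = T ⊔ edge s t)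
    (h : ¬ T.Adj s t) (hne : s ≠ t) (z : V) :
    H.degree z = T.degree z + ind z s + ind z t := by
  have hd : del H s t = T := by
    subst hH
    ext x y
    simp only [del_adj, SimpleGraph.sup_adj, SimpleGraph.edge_adj]
    constructor
    · rintro ⟨h1 | h1, h2⟩
      · exact h1
      · exact absurd h1.1 h2
    · intro h1
      refine ⟨Or.inl h1, ?_⟩
      rintro (⟨rfl, rfl⟩ | ⟨rfl, rfl⟩)
      · exact h h1
      · exact h h1.symm
  have := del_deg (T := H) (a := s) (c := t)
    (by subst hH; simp [SimpleGraph.edge_adj, hne]) z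
  rw [hd] at this
  exact this.symm

theorem sw_deg [Fintype V] {T : SimpleGraph V} (hT : T.IsTree) {a c s t : V} (h : T.Adj a c)
    (hs : (del T a c).Reachable a s) (ht : (del T a c).Reachable c t) (z : V) :
    (sw T a c s t).degree z + ind z a + ind z c = T.degree z + ind z s + ind z t := by
  have hn := not_reach_st hT h hs ht
  have hst : s ≠ t := by rintro rfl; exact hn (Reachable.refl _)
  have h1 := add_deg (H := sw T a c s t) (T := del T a c) (s := s) (t := t) rfl (fun h => hn h.reachable) hst z
  have h2 := del_deg h z
  omega

/-- cost function: number of vertices of degree different from two -/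
noncomputable def f (d : ℕ) : ℕ := if d = 2 then 0 else 1

noncomputable def cost [Fintype V] (T : SimpleGraph V) : ℕ := ∑ z, f (T.degree z)

theorem cost_le [Fintype V] (T : SimpleGraph V) :
    (leafSet T).card + (branchSet T).card ≤ cost T := by
  unfold leafSet branchSet cost
  rw [Finset.card_filter, Finset.card_filter, ← Finset.sum_add_distrib]
  apply Finset.sum_le_sum
  intro z _
  unfold f
  split_ifs <;> omega

theorem cost_d2 [Fintype V] (T : SimpleGraph V) :
    cost T + (Finset.univ.filter fun v => T.degree v = 2).card = Fintype.card V := by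
  unfold cost
  rw [Finset.card_filter, ← Finset.sum_add_distrib, ← Finset.card_univ, Finset.card_eq_sum_ones]
  apply Finset.sum_congr rfl
  intro z _
  unfold f
  split_ifs <;> omega

/-- a bare path from the leaf `u` up to its last vertex `y`, attached to `b`, as a set `U`. -/
structure Leg0 [Fintype V] (T : SimpleGraph V) (u : V) (U : Finset V) (y b : V) : Prop where
  hu : u ∈ U
  hy : y ∈ U
  hb : b ∉ U
  adj : T.Adj y b
  closed : ∀ x ∈ U, ∀ x', T.Adj x x' → x' ∈ U ∨ (x = y ∧ x' = b)
  du : T.degree u = 1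
  dU : ∀ x ∈ U, x ≠ u → T.degree x = 2

structure Leg [Fintype V] (T : SimpleGraph V) (u : V) (U : Finset V) (y b : V) : Prop
    extends Leg0 T u U y b where
  sub : ∀ w ∈ U, ∃ U1 ⊆ U, ∃ q, Leg0 T u U1 w q

section
variable [Fintype V] {T : SimpleGraph V} {u y b : V} {U : Finset V}

theorem Leg0.congr {T' : SimpleGraph V} (h : Leg0 T u U y b)
    (ha : ∀ x ∈ U, ∀ x', T'.Adj x x' ↔ T.Adj x x') (hd : ∀ x ∈ U, T'.degree x = T.degree x) :
    Leg0 T' u U y b where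
  hu := h.hu
  hy := h.hy
  hb := h.hb
  adj := (ha _ h.hy _).2 h.adj
  closed := fun x hx x' hxx => h.closed x hx x' ((ha x hx x').1 hxx)
  du := by rw [hd _ h.hu, h.du]
  dU := fun x hx hxu => by rw [hd _ hx, h.dU x hx hxu]

theorem Leg.congr {T' : SimpleGraph V} (h : Leg T u U y b)
    (ha : ∀ x ∈ U, ∀ x', T'.Adj x x' ↔ T.Adj x x') (hd : ∀ x ∈ U, T'.degree x = T.degree x) :
    Leg T' u U y b where
  toLeg0 := h.toLeg0.congr ha hd
  sub := fun w hw => by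
    obtain ⟨U1, h1, q, h2⟩ := h.sub w hw
    exact ⟨U1, h1, q, h2.congr (fun x hx => ha x (h1 hx)) (fun x hx => hd x (h1 hx))⟩

/-- A walk leaving the leg passes through its last vertex. -/
theorem Leg0.reach_walk (h : Leg0 T u U y b) {H1 H : SimpleGraph V} (h1 : H1 ≤ T)
    (hH : ∀ s ∈ U, ∀ t ∈ U, H1.Adj s t → H.Adj s t) {x z : V} (p : H1.Walk x z)
    (hx : x ∈ U) (hz : z ∉ U) : H.Reachable x y := by
  induction p with
  | nil => exact absurd hx hz
  | @cons x x' z hxx p ih =>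
    rcases h.closed x hx x' (h1 hxx) with h2 | ⟨rfl, rfl⟩
    · exact (hH x hx x' h2 hxx).reachable.trans (ih h2 hz)
    · exact Reachable.refl _

theorem Leg0.reach (h : Leg0 T u U y b) {H1 H : SimpleGraph V} (h1 : H1 ≤ T)
    (hH : ∀ s ∈ U, ∀ t ∈ U, H1.Adj s t → H.Adj s t) {x z : V} (p : H1.Reachable x z)
    (hx : x ∈ U) (hz : z ∉ U) : H.Reachable x y := by
  obtain ⟨p⟩ := p
  exact h.reach_walk h1 hH p hx hz

theorem Leg0.reach_in (h : Leg0 T u U y b) (hT : T.Connected) {H : SimpleGraph V}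
    (hH : ∀ s ∈ U, ∀ t ∈ U, T.Adj s t → H.Adj s t) {x : V} (hx : x ∈ U) : H.Reachable x y :=
  h.reach le_rfl hH (hT.preconnected x b) hx h.hb

theorem Leg0.out (h : Leg0 T u U y b) {H1 H : SimpleGraph V} (h1 : H1 ≤ T)
    (hH : ∀ s t, s ∉ U → t ∉ U → H1.Adj s t → H.Adj s t) {z : V} (p : H1.Reachable z b)
    (hz : z ∉ U) : H.Reachable z b := by
  obtain ⟨p⟩ := p
  have hb := h.hb
  have key : ∀ x z : V, H1.Walk x z → z = b → x ∉ U → H.Reachable x b := by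
    intro x z p
    induction p with
    | nil => rintro rfl _; exact Reachable.refl _
    | @cons x x' z hxx p ih =>
      intro hz hx
      by_cases h2 : x' ∈ U
      · rcases h.closed x' h2 x (h1 hxx).symm with h3 | ⟨_, rfl⟩
        · exact absurd h3 hx
        · exact Reachable.refl _
      · exact (hH x x' hx h2 hxx).reachable.trans (ih hz h2)
  exact key z b p rfl hz

theorem Leg0.stay (h : Leg0 T u U y b) {H : SimpleGraph V} (h1 : H ≤ T)
    (hH : ¬ H.Adj y b) {x z : V} (p : H.Reachable x z) (hx : x ∈ U) : z ∈ U := by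
  obtain ⟨p⟩ := p
  induction p with
  | nil => exact hx
  | @cons x x' z hxx p ih =>
    rcases h.closed x hx x' (h1 hxx) with h2 | ⟨rfl, rfl⟩
    · exact ih h2
    · exact absurd hxx hH

theorem Leg0.disj (h : Leg0 T u U y b) (hT : T.Connected) {v y' : V} {W : Finset V}
    (h' : Leg0 T v W y' b) (huv : u ≠ v) {x : V} (hx : x ∈ U) (hx' : x ∈ W) : False := by
  have h0 : ∀ s ∈ U, ∀ t ∈ U, T.Adj s t → (del T y' b).Adj s t := by
    intro s hs t ht hst
    rw [del_adj]
    refine ⟨hst, ?_⟩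
    rintro (⟨_, rfl⟩ | ⟨rfl, _⟩)
    · exact h.hb ht
    · exact h.hb hs
  have h1 : (del T y' b).Reachable x u := (h.reach_in hT h0 hx).trans (h.reach_in hT h0 h.hu).symm
  have h2 : u ∈ W := h'.stay (del_le _ _ _) (by simp [del_adj]) h1 hx'
  have := h'.dU u h2 huv
  have := h.du
  omega

end

/-- `T` is a spanning tree of `G` of minimum cost. -/
structure IsMin [Fintype V] (G T : SimpleGraph V) : Prop where
  tree : T.IsTree
  le : T ≤ G
  min : ∀ T' : SimpleGraph V, T'.IsTree → T' ≤ G → cost T ≤ cost T'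

section
variable [Fintype V] {G T : SimpleGraph V}

theorem exists_par (hT : T.IsTree) {w b : V} (hwb : w ≠ b) :
    ∃ p, T.Adj w p ∧ (del T w p).Reachable p b := by
  obtain ⟨q, hq⟩ := hT.connected.exists_isPath w b
  cases q with
  | nil => exact absurd rfl hwb
  | @cons _ p _ h q =>
    refine ⟨p, h, ?_⟩
    rw [Walk.cons_isPath_iff] at hq
    refine ⟨q.toDeleteEdge s(w, p) ?_⟩
    intro he
    exact hq.2 (Walk.fst_mem_support_of_mem_edges _ he)

theorem par_par (hT : T.IsTree) {w p q b : V} (h : T.Adj w p)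
    (hr : (del T w p).Reachable p b) (hr' : (del T p q).Reachable q b) : q ≠ w := by
  rintro rfl
  have e : del T p q = del T q p := by
    ext x y; simp only [del_adj]; tauto
  rw [e] at hr'
  exact tree_not_reach hT h (hr'.trans hr.symm)

theorem two_le_deg {p x y : V} (hx : T.Adj p x) (hy : T.Adj p y) (h : x ≠ y) :
    2 ≤ T.degree p := by
  rw [← card_neighborFinset_eq_degree]
  have : ({x, y} : Finset V) ⊆ T.neighborFinset p := by
    intro z hz
    simp only [Finset.mem_insert, Finset.mem_singleton] at hz
    rcases hz with rfl | rfl <;> simpa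
  calc 2 = ({x, y} : Finset V).card := (Finset.card_pair h).symm
    _ ≤ _ := Finset.card_le_card this

theorem three_le_deg {p x y z : V} (hx : T.Adj p x) (hy : T.Adj p y) (hz : T.Adj p z)
    (h : x ≠ y) (h' : x ≠ z) (h'' : y ≠ z) : 3 ≤ T.degree p := by
  rw [← card_neighborFinset_eq_degree]
  have : ({x, y, z} : Finset V) ⊆ T.neighborFinset p := by
    intro z hz
    simp only [Finset.mem_insert, Finset.mem_singleton] at hz
    rcases hz with rfl | rfl | rfl <;> simpa
  calc 3 = ({x, y, z} : Finset V).card := (Finset.card_eq_three.2 ⟨x, y, z, h, h', h'', rfl⟩).symm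
    _ ≤ _ := Finset.card_le_card this

theorem IsMin.absurd1 (hM : IsMin G T) {T' : SimpleGraph V} (hT' : T'.IsTree) (hle : T' ≤ G)
    {a : V} (h : ∀ z, f (T'.degree z) + ind z a ≤ f (T.degree z)) : False := by
  have h1 := Finset.sum_le_sum (s := Finset.univ) (fun z _ => h z)
  rw [Finset.sum_add_distrib, sum_ind] at h1
  have := hM.min T' hT' hle
  unfold cost at this
  omega

theorem IsMin.absurd2 (hM : IsMin G T) {T' : SimpleGraph V} (hT' : T'.IsTree) (hle : T' ≤ G)
    {a b c : V} (h : ∀ z, f (T'.degree z) + ind z a + ind z b ≤ f (T.degree z) + ind z c) :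
    False := by
  have h1 := Finset.sum_le_sum (s := Finset.univ) (fun z _ => h z)
  simp only [Finset.sum_add_distrib, sum_ind] at h1
  have := hM.min T' hT' hle
  unfold cost at this
  omega

theorem reach_u (hT : T.IsTree) {u y b w p : V} {U : Finset V} (h : Leg0 T u U y b)
    (hw : w ∉ U) (hwb : w ≠ b) (hr : (del T w p).Reachable p b) :
    (del T w p).Reachable p u := by
  have h0 : ∀ s ∈ U, ∀ t, T.Adj s t → t ≠ w → (del T w p).Adj s t := by
    intro s hs t hst ht
    rw [del_adj]
    refine ⟨hst, ?_⟩
    rintro (⟨rfl, _⟩ | ⟨_, rfl⟩)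
    · exact hw hs
    · exact ht rfl
  have h1 := h.reach_in hT.connected
    (fun s hs t ht hst => h0 s hs t hst (by rintro rfl; exact hw ht)) h.hu
  exact hr.trans ((h0 y h.hy b h.adj hwb.symm).reachable.symm.trans h1.symm)

theorem lemA (hM : IsMin G T) {u y b w p : V} {U : Finset V} (h : Leg0 T u U y b)
    (hw : w ∉ U) (hwb : w ≠ b) (ha : T.Adj w p) (hr : (del T w p).Reachable p b)
    (hG : G.Adj u w) : T.degree p < 3 := by
  by_contra hp
  have hru := reach_u hM.tree h hw hwb hr
  refine hM.absurd1 (T' := sw T w p w u) (sw_tree hM.tree ha (Reachable.refl _) hru)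
    (sw_le hM.le hG.symm) (a := u) ?_
  intro z
  have hd := sw_deg hM.tree ha (Reachable.refl _) hru z
  have hdu := h.du
  by_cases hzu : z = u
  · subst hzu
    have : z ≠ p := by rintro rfl; omega
    simp only [ind, f] at hd ⊢
    split_ifs at hd ⊢ <;> simp_all
  · by_cases hzp : z = p
    · subst hzp
      simp only [ind, f] at hd ⊢
      split_ifs at hd ⊢ <;> simp_all
    · have : (sw T w p w u).degree z = T.degree z := by
        simp only [ind, if_neg hzu, if_neg hzp] at hd
        omega
      rw [this]; simp [ind, hzu]

theorem del_inside {u y b : V} {U : Finset V} (h : Leg0 T u U y b) (x : V) :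
    ∀ s ∈ U, ∀ t ∈ U, T.Adj s t → (del T x b).Adj s t := by
  intro s hs t ht hst
  rw [del_adj]
  refine ⟨hst, ?_⟩
  rintro (⟨_, rfl⟩ | ⟨rfl, _⟩)
  · exact h.hb ht
  · exact h.hb hs

theorem reach_B (hT : T.IsTree) {v y b z : V} {W : Finset V} (h : Leg0 T v W y b) (hz : z ∉ W) :
    (del T y b).Reachable y v ∧ (del T y b).Reachable b z := by
  refine ⟨(h.reach_in hT.connected (del_inside h y) h.hu).symm, ?_⟩
  refine (h.out le_rfl ?_ (hT.connected.preconnected z b) hz).symm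
  intro s t hs ht hst
  rw [del_adj]
  refine ⟨hst, ?_⟩
  rintro (⟨rfl, _⟩ | ⟨_, rfl⟩)
  · exact hs h.hy
  · exact ht h.hy

theorem ptwise {d d' : V → ℕ} {u v y b : V} (hd : ∀ z, d' z + ind z y + ind z b =
    d z + ind z u + ind z v) (hu : d u = 1) (hv : d v = 1) (huv : u ≠ v) (hb : 3 ≤ d b)
    (hyb : y ≠ b) (hy : y ≠ u → y ≠ v → d y = 2) (z : V) :
    f (d' z) + ind z u + ind z v ≤ f (d z) + ind z y := by
  have h := hd z
  have hbu : b ≠ u := by rintro rfl; omega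
  have hbv : b ≠ v := by rintro rfl; omega
  by_cases h1 : z = b
  · subst h1
    simp only [ind, f] at h ⊢
    split_ifs at h ⊢ <;> simp_all
  by_cases h2 : z = u
  · subst h2
    simp only [ind, f] at h ⊢
    split_ifs at h ⊢ <;> simp_all
  by_cases h3 : z = v
  · subst h3
    simp only [ind, f] at h ⊢
    split_ifs at h ⊢ <;> simp_all
  by_cases h4 : z = y
  · subst h4
    have := hy h2 h3
    simp only [ind, f] at h ⊢
    split_ifs at h ⊢ <;> simp_all
  have : d' z = d z := by
    simp only [ind, if_neg h1, if_neg h2, if_neg h3, if_neg h4] at h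
    omega
  rw [this]
  simp [ind, h1, h2, h3, h4]

theorem lemB (hM : IsMin G T) {v y b z : V} {W : Finset V} (h : Leg0 T v W y b)
    (hb : 3 ≤ T.degree b) (hz : T.degree z = 1) (hzv : z ≠ v) : ¬ G.Adj v z := by
  intro hG
  have hzW : z ∉ W := fun hzW => by have := h.dU z hzW hzv; omega
  obtain ⟨h1, h2⟩ := reach_B hM.tree h hzW
  refine hM.absurd2 (sw_tree hM.tree h.adj h1 h2) (sw_le hM.le hG) (a := v) (b := z) (c := y) ?_
  exact ptwise (d := fun x => T.degree x) (sw_deg hM.tree h.adj h1 h2) h.du hz hzv.symm hb h.adj.ne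
    (fun hy _ => h.dU y h.hy hy)

theorem lemC (hM : IsMin G T) {u v y y' b w p : V} {U W : Finset V} (h : Leg0 T u U y b)
    (h' : Leg T v W y' b) (hb : 3 ≤ T.degree b) (huv : u ≠ v)
    (hw : w ∉ U) (hwb : w ≠ b) (ha : T.Adj w p) (hr : (del T w p).Reachable p b)
    (hG : G.Adj u w) : ¬ G.Adj v p := by
  intro hG'
  have hT := hM.tree
  have hwv : w ≠ v := by
    rintro rfl
    exact lemB hM h hb h'.du huv.symm hG
  have hpU : p ∉ U := by
    intro hpU
    rcases h.closed p hpU w ha.symm with h1 | h1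
    · exact hw h1
    · exact hwb h1.2
  have hru := reach_u hT h hw hwb hr
  have hT1 := sw_tree hT ha (Reachable.refl _) hru
  have hd1 := sw_deg hT ha (Reachable.refl _) hru
  have hG1 : sw T w p w u ≤ G := sw_le hM.le hG.symm
  have hle1 : del T w p ≤ sw T w p w u := le_sup_left
  have hdis : ∀ x, x ∈ U → x ∈ W → False := fun x => h.disj hT.connected h'.toLeg0 huv
  by_cases hwW : w ∈ W
  · have hadj : (sw T w p w u).Adj y b := by
      rw [sw_adj]; left; refine ⟨h.adj, ?_⟩
      rintro (⟨rfl, _⟩ | ⟨_, rfl⟩)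
      · exact hw h.hy
      · exact hwb rfl
    have hs : (del (sw T w p w u) y b).Reachable y v := by
      have r1 : (del (sw T w p w u) y b).Reachable u y := by
        refine h.reach_in hT.connected ?_ h.hu
        intro s hs t ht hst
        rw [del_adj, sw_adj]
        refine ⟨Or.inl ⟨hst, ?_⟩, ?_⟩
        · rintro (⟨rfl, _⟩ | ⟨_, rfl⟩)
          · exact hw hs
          · exact hw ht
        · rintro (⟨_, rfl⟩ | ⟨rfl, _⟩)
          · exact h.hb ht
          · exact h.hb hs
      have r2 : (del (sw T w p w u) y b).Adj u w := by
        rw [del_adj, sw_adj]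
        refine ⟨Or.inr ⟨Or.inr ⟨rfl, rfl⟩, hG.ne⟩, ?_⟩
        rintro (⟨_, rfl⟩ | ⟨rfl, _⟩)
        · exact hwb rfl
        · exact h.hb h.hu
      have r3 : (del (sw T w p w u) y b).Reachable v w := by
        obtain ⟨U1, hU1, q, hq⟩ := h'.sub w hwW
        have hpU1 : p ∉ U1 := by
          intro hpU1
          have := hq.reach (del_le T w p) (H := del T w p) (fun s _ t _ hst => hst) hr hpU1
            (fun hbU => h'.hb (hU1 hbU))
          exact tree_not_reach hT ha this.symm
        refine hq.reach_in hT.connected ?_ hq.hu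
        intro s hs t ht hst
        rw [del_adj, sw_adj]
        refine ⟨Or.inl ⟨hst, ?_⟩, ?_⟩
        · rintro (⟨_, rfl⟩ | ⟨rfl, _⟩)
          · exact hpU1 ht
          · exact hpU1 hs
        · rintro (⟨_, rfl⟩ | ⟨rfl, _⟩)
          · exact h'.hb (hU1 ht)
          · exact h'.hb (hU1 hs)
      exact r1.symm.trans (r2.reachable.trans r3.symm)
    have ht : (del (sw T w p w u) y b).Reachable b p := by
      by_cases hpb : p = b
      · subst hpb; exact Reachable.refl _
      have hpW : p ∈ W := by
        rcases h'.closed w hwW p ha with h1 | h1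
        · exact h1
        · exact absurd h1.2 hpb
      have r1 : (del (sw T w p w u) y b).Reachable p y' := by
        refine h'.reach (del_le T w p) ?_ hr hpW h'.hb
        intro s hs1 t ht1 hst
        rw [del_adj]
        refine ⟨hle1 hst, ?_⟩
        rintro (⟨_, rfl⟩ | ⟨rfl, _⟩)
        · exact h'.hb ht1
        · exact h'.hb hs1
      have r2 : (del (sw T w p w u) y b).Adj y' b := by
        rw [del_adj, sw_adj]
        refine ⟨Or.inl ⟨h'.adj, ?_⟩, ?_⟩
        · rintro (⟨_, rfl⟩ | ⟨_, rfl⟩)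
          · exact hpb rfl
          · exact hwb rfl
        · rintro (⟨rfl, _⟩ | ⟨rfl, _⟩)
          · exact hdis _ h.hy h'.hy
          · exact h'.hb h'.hy
      exact (r1.trans r2.reachable).symm
    have hd2 := sw_deg hT1 hadj hs ht
    refine hM.absurd2 (sw_tree hT1 hadj hs ht) (sw_le hG1 hG') (a := u) (b := v) (c := y) ?_
    refine ptwise (d := fun x => T.degree x) (u := u) (v := v) (b := b) (fun z => ?_) h.du h'.du huv
      hb h.adj.ne (fun hy _ => h.dU y h.hy hy)
    have := hd1 z
    have := hd2 z
    omega
  · have hpW : p ∉ W := by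
      intro hpW
      rcases h'.closed p hpW w ha.symm with h1 | h1
      · exact hwW h1
      · exact hwb h1.2
    have hadj : (sw T w p w u).Adj y' b := by
      rw [sw_adj]; left; refine ⟨h'.adj, ?_⟩
      rintro (⟨rfl, _⟩ | ⟨_, rfl⟩)
      · exact hwW h'.hy
      · exact hwb rfl
    have hs : (del (sw T w p w u) y' b).Reachable y' v := by
      refine (h'.reach_in hT.connected ?_ h'.hu).symm
      intro s hs t ht hst
      rw [del_adj, sw_adj]
      refine ⟨Or.inl ⟨hst, ?_⟩, ?_⟩
      · rintro (⟨rfl, _⟩ | ⟨_, rfl⟩)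
        · exact hwW hs
        · exact hwW ht
      · rintro (⟨_, rfl⟩ | ⟨rfl, _⟩)
        · exact h'.hb ht
        · exact h'.hb hs
    have ht : (del (sw T w p w u) y' b).Reachable b p := by
      refine (h'.out (del_le T w p) ?_ hr hpW).symm
      intro s t hs1 ht1 hst
      rw [del_adj]
      refine ⟨hle1 hst, ?_⟩
      rintro (⟨rfl, _⟩ | ⟨_, rfl⟩)
      · exact hs1 h'.hy
      · exact ht1 h'.hy
    have hd2 := sw_deg hT1 hadj hs ht
    refine hM.absurd2 (sw_tree hT1 hadj hs ht) (sw_le hG1 hG') (a := u) (b := v) (c := y') ?_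
    refine ptwise (d := fun x => T.degree x) (u := u) (v := v) (b := b) (fun z => ?_) h.du h'.du huv
      hb h'.adj.ne (fun _ hy => h'.dU y' h'.hy hy)
    have := hd1 z
    have := hd2 z
    omega

end

section
variable [Fintype V] {G T : SimpleGraph V}

theorem exists_leg_aux (hT : T.IsTree) {b0 : V} (hb0 : 3 ≤ T.degree b0) {u : V} (n : ℕ) :
    ∀ (U : Finset V) (y b : V), Leg T u U y b → Fintype.card V ≤ n + U.card →
      ∃ U y b, Leg T u U y b ∧ 3 ≤ T.degree b := by
  induction n with
  | zero =>
    intro U y b h hc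
    have : U = Finset.univ := by
      rw [← Finset.card_eq_iff_eq_univ]
      have := Finset.card_le_univ U
      omega
    exact absurd (by rw [this]; exact Finset.mem_univ b) h.hb
  | succ n ih =>
    intro U y b h hc
    by_cases hb : 3 ≤ T.degree b
    · exact ⟨U, y, b, h, hb⟩
    have hb1 : 0 < T.degree b := by
      rw [degree_pos_iff_exists_adj]; exact ⟨y, h.adj.symm⟩
    by_cases h1 : T.degree b = 1
    · -- the tree is a path
      exfalso
      obtain ⟨c, hc1, hc2⟩ := degree_eq_one_iff_existsUnique_adj.1 h1
      have hyc : y = c := hc2 y h.adj.symm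
      have key : ∀ x z : V, T.Walk x z → x ∈ insert b U → z ∈ insert b U := by
        intro x z p
        induction p with
        | nil => exact id
        | @cons x x' z hxx p ih =>
          intro hx
          apply ih
          rcases Finset.mem_insert.1 hx with rfl | hx
          · have := hc2 x' hxx
            rw [this, ← hyc]
            exact Finset.mem_insert_of_mem h.hy
          · rcases h.closed x hx x' hxx with h2 | h2
            · exact Finset.mem_insert_of_mem h2
            · rw [h2.2]; exact Finset.mem_insert_self _ _
      obtain ⟨p⟩ := hT.connected.preconnected b b0
      have := key b b0 p (Finset.mem_insert_self _ _)
      rcases Finset.mem_insert.1 this with h2 | h2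
      · subst h2; omega
      · by_cases h3 : b0 = u
        · subst h3; have := h.du; omega
        · have := h.dU b0 h2 h3; omega
    have h2 : T.degree b = 2 := by omega
    have hbu : b ≠ u := by rintro rfl; exact h.hb h.hu
    obtain ⟨b', hb'⟩ : ∃ b', T.neighborFinset b = {y, b'} ∧ b' ≠ y := by
      rw [← card_neighborFinset_eq_degree, Finset.card_eq_two] at h2
      obtain ⟨x, z, hxz, he⟩ := h2
      have hy : y ∈ T.neighborFinset b := by simpa using h.adj.symm
      rw [he] at hy
      simp only [Finset.mem_insert, Finset.mem_singleton] at hy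
      rcases hy with rfl | rfl
      · exact ⟨z, he, hxz.symm⟩
      · exact ⟨x, by rw [he, Finset.pair_comm], hxz⟩
    have hN : ∀ x, T.Adj b x ↔ x = y ∨ x = b' := by
      intro x
      rw [← mem_neighborFinset, hb'.1]
      simp
    have hbb' : T.Adj b b' := (hN b').2 (Or.inr rfl)
    have hb'U : b' ∉ U := by
      intro h3
      rcases h.closed b' h3 b hbb'.symm with h4 | h4
      · exact h.hb h4
      · exact hb'.2 h4.1
    have hleg0 : Leg0 T u (insert b U) b b' :=
      { hu := Finset.mem_insert_of_mem h.hu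
        hy := Finset.mem_insert_self _ _
        hb := by
          rw [Finset.mem_insert]
          rintro (h3 | h3)
          · exact hbb'.ne h3.symm
          · exact hb'U h3
        adj := hbb'
        closed := by
          intro x hx x' hxx
          rcases Finset.mem_insert.1 hx with rfl | hx
          · rcases (hN x').1 hxx with rfl | rfl
            · left; exact Finset.mem_insert_of_mem h.hy
            · right; exact ⟨rfl, rfl⟩
          · left
            rcases h.closed x hx x' hxx with h3 | h3
            · exact Finset.mem_insert_of_mem h3
            · rw [h3.2]; exact Finset.mem_insert_self _ _
        du := h.du
        dU := by
          intro x hx hxu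
          rcases Finset.mem_insert.1 hx with rfl | hx
          · exact h2
          · exact h.dU x hx hxu }
    refine ih (insert b U) b b' ⟨hleg0, ?_⟩ ?_
    · intro w hw
      rcases Finset.mem_insert.1 hw with rfl | hw
      · exact ⟨_, Finset.Subset.refl _, b', hleg0⟩
      · obtain ⟨U1, hU1, q, hq⟩ := h.sub w hw
        exact ⟨U1, hU1.trans (Finset.subset_insert _ _), q, hq⟩
    · rw [Finset.card_insert_of_notMem h.hb]; omega

theorem exists_leg (hT : T.IsTree) {b0 : V} (hb0 : 3 ≤ T.degree b0) {u : V}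
    (hu : T.degree u = 1) : ∃ U y b, Leg T u U y b ∧ 3 ≤ T.degree b := by
  obtain ⟨c, hc1, hc2⟩ := degree_eq_one_iff_existsUnique_adj.1 hu
  have h0 : Leg0 T u {u} u c :=
    { hu := Finset.mem_singleton_self _
      hy := Finset.mem_singleton_self _
      hb := by rw [Finset.mem_singleton]; exact hc1.ne.symm
      adj := hc1
      closed := by
        intro x hx x' hxx
        rw [Finset.mem_singleton] at hx
        subst hx
        exact Or.inr ⟨rfl, hc2 x' hxx⟩
      du := hu
      dU := by
        intro x hx hxu
        exact absurd (Finset.mem_singleton.1 hx) hxu }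
  refine exists_leg_aux hT hb0 (Fintype.card V) {u} u c ⟨h0, ?_⟩ (by omega)
  intro w hw
  rw [Finset.mem_singleton] at hw
  subst hw
  exact ⟨_, Finset.Subset.refl _, c, h0⟩

/-- leaves whose leg is attached to `b` -/
noncomputable def legs (T : SimpleGraph V) (b : V) : Finset V :=
  Finset.univ.filter fun u => ∃ U y, Leg T u U y b

/-- terminal branch vertices -/
def Terminal (T : SimpleGraph V) (b : V) : Prop :=
  3 ≤ T.degree b ∧ T.degree b ≤ (legs T b).card + 1

theorem sum_deg (hT : T.IsTree) : ∑ z, T.degree z + 2 = 2 * Fintype.card V := by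
  rw [sum_degrees_eq_twice_card_edges]
  have := hT.card_edgeFinset
  have h2 : 0 < Fintype.card V := Fintype.card_pos_iff.2 hT.connected.nonempty
  omega

theorem exists_terminal (hT : T.IsTree) (hc : 3 ≤ cost T) : ∃ b, Terminal T b := by
  have hcard : cost T ≤ Fintype.card V := by have := cost_d2 T; omega
  have hnt : Nontrivial V := Fintype.one_lt_card_iff_nontrivial.1 (by omega)
  have hpos : ∀ z, 0 < T.degree z := fun z =>
    hT.connected.preconnected.degree_pos_of_nontrivial z
  have hsum := sum_deg hT
  by_contra hno
  unfold Terminal at hno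
  push Not at hno
  -- pointwise
  by_cases hB : ∃ b0, 3 ≤ T.degree b0
  · obtain ⟨b0, hb0⟩ := hB
    have h1 : (leafSet T).card ≤ ∑ b ∈ branchSet T, (legs T b).card := by
      refine le_trans (Finset.card_le_card (t := (branchSet T).biUnion (legs T)) ?_)
        Finset.card_biUnion_le
      intro u hu
      simp only [leafSet, Finset.mem_filter, Finset.mem_univ, true_and] at hu
      obtain ⟨U, y, b, h, hb⟩ := exists_leg hT hb0 hu
      rw [Finset.mem_biUnion]
      exact ⟨b, by simp [branchSet, hb], by
        simp only [legs, Finset.mem_filter, Finset.mem_univ, true_and]; exact ⟨U, y, h⟩⟩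
    have h2 : ∑ b ∈ branchSet T, (legs T b).card + ∑ b ∈ branchSet T, 2
        ≤ ∑ b ∈ branchSet T, T.degree b := by
      rw [← Finset.sum_add_distrib]
      apply Finset.sum_le_sum
      intro b hb
      simp only [branchSet, Finset.mem_filter, Finset.mem_univ, true_and] at hb
      have := hno b hb
      omega
    have h3 : ∑ z, T.degree z + (leafSet T).card + ∑ b ∈ branchSet T, 2 =
        ∑ z : V, 2 + ∑ b ∈ branchSet T, T.degree b := by
      unfold leafSet branchSet
      rw [Finset.sum_filter, Finset.sum_filter, Finset.card_filter, ← Finset.sum_add_distrib,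
        ← Finset.sum_add_distrib, ← Finset.sum_add_distrib]
      apply Finset.sum_congr rfl
      intro z _
      have := hpos z
      split_ifs <;> omega
    have h4 : ∑ z : V, 2 = 2 * Fintype.card V := by simp [mul_comm]
    omega
  · push Not at hB
    have h3 : ∑ z, T.degree z + cost T = ∑ z : V, 2 := by
      unfold cost
      rw [← Finset.sum_add_distrib]
      apply Finset.sum_congr rfl
      intro z _
      have := hpos z
      have := hB z
      unfold f
      split_ifs <;> omega
    have h4 : ∑ z : V, 2 = 2 * Fintype.card V := by simp [mul_comm]
    omega

theorem lemM (hM : IsMin G T) {b : V} (hb : Terminal T b)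
    (hmin : ∀ T' b', IsMin G T' → Terminal T' b' → T.degree b ≤ T'.degree b')
    {v y w : V} {W : Finset V} (h : Leg T v W y b) (hw : 3 ≤ T.degree w) (hwb : w ≠ b) :
    ¬ G.Adj v w := by
  intro hG
  have hT := hM.tree
  have hvw : w ≠ v := hG.ne.symm
  have hdv := h.du
  have hbv : b ≠ v := by rintro rfl; exact h.hb h.hu
  have hyb : y ≠ b := h.adj.ne
  have hwW : w ∉ W := fun hwW => by have := h.dU w hwW hvw; omega
  have hyw : y ≠ w := by rintro rfl; exact hwW h.hy
  obtain ⟨h1, h2⟩ := reach_B hT h.toLeg0 hwW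
  have hT' := sw_tree hT h.adj h1 h2
  have hd := sw_deg hT h.adj h1 h2
  have hle : sw T y b v w ≤ G := sw_le hM.le hG
  have hb3 := hb.1
  have hpt : ∀ z, z ≠ b → f ((sw T y b v w).degree z) + ind z v ≤ f (T.degree z) + ind z y := by
    intro z h1
    have hdz := hd z
    by_cases h2 : z = w
    · subst h2
      simp only [ind, f] at hdz ⊢
      split_ifs at hdz ⊢ <;> simp_all
    by_cases h3 : z = v
    · subst h3
      simp only [ind, f] at hdz ⊢
      split_ifs at hdz ⊢ <;> simp_all
    by_cases h4 : z = y
    · subst h4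
      have := h.dU z h.hy h3
      simp only [ind, f] at hdz ⊢
      split_ifs at hdz ⊢ <;> simp_all
    have : (sw T y b v w).degree z = T.degree z := by
      simp only [ind, if_neg h1, if_neg h2, if_neg h3, if_neg h4] at hdz
      omega
    rw [this]
    simp [ind, h3, h4]
  have hdb : (sw T y b v w).degree b + 1 = T.degree b := by
    have := hd b
    simpa [ind, hbv, hyb.symm, hwb.symm] using this
  by_cases h3 : T.degree b = 3
  · refine hM.absurd2 hT' hle (a := v) (b := b) (c := y) ?_
    intro z
    by_cases hz : z = b
    · subst hz
      have h4 : (sw T y z v w).degree z = 2 := by omega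
      rw [h4, h3]
      simp [ind, f, hbv]
    · have := hpt z hz
      simpa [ind, hz] using this
  · have hcost : cost (sw T y b v w) ≤ cost T := by
      have := Finset.sum_le_sum (s := Finset.univ)
        (f := fun z => f ((sw T y b v w).degree z) + ind z v)
        (g := fun z => f (T.degree z) + ind z y) (fun z _ => by
          by_cases hz : z = b
          · subst hz
            have h4 : f (T.degree z) = 1 := by unfold f; split_ifs <;> omega
            have h5 : f ((sw T y z v w).degree z) ≤ 1 := by unfold f; split_ifs <;> omega
            simp only [ind, if_neg hbv, if_neg hyb.symm]
            omega
          · exact hpt z hz)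
      simp only [Finset.sum_add_distrib, sum_ind] at this
      unfold cost
      omega
    have hM' : IsMin G (sw T y b v w) :=
      ⟨hT', hle, fun T' h1 h2 => hcost.trans (hM.min T' h1 h2)⟩
    have hlegs : (legs T b).erase v ⊆ legs (sw T y b v w) b := by
      intro u hu
      simp only [legs, Finset.mem_erase, Finset.mem_filter, Finset.mem_univ, true_and] at hu ⊢
      obtain ⟨huv, U, yu, hU⟩ := hu
      have hdis : ∀ x, x ∈ U → x ∉ W := fun x hx hx' =>
        hU.toLeg0.disj hT.connected h.toLeg0 huv hx hx'
      have hwU : w ∉ U := by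
        intro hwU
        by_cases hwu : w = u
        · subst hwu; have := hU.du; omega
        · have := hU.dU w hwU hwu; omega
      refine ⟨U, yu, hU.congr ?_ ?_⟩
      · intro x hx x'
        rw [sw_adj]
        have e1 : x ≠ y := by rintro rfl; exact hdis _ hx h.hy
        have e2 : x ≠ b := by rintro rfl; exact hU.hb hx
        have e3 : x ≠ v := by rintro rfl; exact hdis _ hx h.hu
        have e4 : x ≠ w := by rintro rfl; exact hwU hx
        simp [e1, e2, e3, e4]
      · intro x hx
        have e1 : x ≠ y := by rintro rfl; exact hdis _ hx h.hy
        have e2 : x ≠ b := by rintro rfl; exact hU.hb hx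
        have e3 : x ≠ v := by rintro rfl; exact hdis _ hx h.hu
        have e4 : x ≠ w := by rintro rfl; exact hwU hx
        have := hd x
        simpa [ind, e1, e2, e3, e4] using this
    have hcard := Finset.card_le_card hlegs
    have hcard2 := Finset.pred_card_le_card_erase (s := legs T b) (a := v)
    have hb2 := hb.2
    have := hmin _ b hM' ⟨by omega, by omega⟩
    omega

theorem count (hM : IsMin G T) {b : V} (hb : Terminal T b)
    (hmin : ∀ T' b', IsMin G T' → Terminal T' b' → T.degree b ≤ T'.degree b') :
    ∃ u v, u ≠ v ∧ ¬ G.Adj u v ∧ G.degree u + G.degree v + cost T ≤ Fintype.card V + 2 := by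
  have hT := hM.tree
  have hb3 := hb.1
  have h2 : 1 < (legs T b).card := by have := hb.2; omega
  obtain ⟨u, hu, v, hv, huv⟩ := Finset.one_lt_card.1 h2
  simp only [legs, Finset.mem_filter, Finset.mem_univ, true_and] at hu hv
  obtain ⟨U, y, hU⟩ := hu
  obtain ⟨W, y', hW⟩ := hv
  have hnadj : ¬ G.Adj u v := lemB hM hU.toLeg0 hb3 hW.du huv.symm
  refine ⟨u, v, huv, hnadj, ?_⟩
  have hex : ∀ w : V, ∃ p, w ≠ b → T.Adj w p ∧ (del T w p).Reachable p b := by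
    intro w
    by_cases hw : w = b
    · exact ⟨w, fun h => absurd hw h⟩
    · obtain ⟨p, hp⟩ := exists_par hT hw
      exact ⟨p, fun _ => hp⟩
  choose par hpar using hex
  have hpos : ∀ z, 0 < T.degree z := fun z => by
    have : Nontrivial V := ⟨u, v, huv⟩
    exact hT.connected.preconnected.degree_pos_of_nontrivial z
  -- parents of neighbours
  have hpp : ∀ w, w ≠ b → par w ≠ b → par (par w) ≠ w := fun w hw hpw =>
    par_par hT (hpar w hw).1 (hpar w hw).2 (hpar _ hpw).2
  have hA : ∀ w, w ≠ b → T.degree (par w) < 3 → T.degree (par w) = 2 := by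
    intro w hw h3
    have hpb : par w ≠ b := by intro h; rw [h] at h3; omega
    have := two_le_deg (hpar w hw).1.symm (hpar _ hpb).1 (hpp w hw hpb).symm
    omega
  have hinj : ∀ w w', w ≠ b → w' ≠ b → T.degree (par w) < 3 → par w = par w' → w = w' := by
    intro w w' hw hw' h3 he
    by_contra hne
    have hpb : par w ≠ b := by intro h; rw [h] at h3; omega
    have hpb' : par w' ≠ b := by rwa [← he]
    have h4 := three_le_deg (hpar w hw).1.symm (he ▸ (hpar w' hw').1.symm) (hpar _ hpb).1 hne
      (hpp w hw hpb).symm (he ▸ (hpp w' hw' hpb').symm)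
    omega
  have hdis : ∀ x, x ∈ U → x ∉ W := fun x hx hx' =>
    hU.toLeg0.disj hT.connected hW.toLeg0 huv hx hx'
  set D := Finset.univ.filter fun z => T.degree z = 2 with hD
  -- first half
  have half1 : ((G.neighborFinset u).filter fun w => w ∉ U ∧ w ≠ b).card
      + ((G.neighborFinset v).filter fun w => w ∉ U).card ≤ (D.filter fun w => w ∉ U).card + 1 := by
    have e : (((G.neighborFinset u).filter fun w => w ∉ U ∧ w ≠ b).image par).card =
        ((G.neighborFinset u).filter fun w => w ∉ U ∧ w ≠ b).card := by
      apply Finset.card_image_of_injOn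
      intro w hw w' hw' he
      simp only [Finset.coe_filter, mem_neighborFinset, Set.mem_setOf_eq] at hw hw'
      exact hinj w w' hw.2.2 hw'.2.2 (lemA hM hU.toLeg0 hw.2.1 hw.2.2 (hpar w hw.2.2).1
        (hpar w hw.2.2).2 hw.1) he
    rw [← e, ← Finset.card_union_of_disjoint]
    · refine le_trans (Finset.card_le_card (t := insert b (D.filter fun w => w ∉ U)) ?_)
        (Finset.card_insert_le _ _)
      intro x hx
      rw [Finset.mem_union] at hx
      rw [Finset.mem_insert, Finset.mem_filter, hD, Finset.mem_filter]
      rcases hx with hx | hx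
      · obtain ⟨w, hw, rfl⟩ := Finset.mem_image.1 hx
        simp only [Finset.mem_filter, mem_neighborFinset] at hw
        obtain ⟨hw1, hw2, hw3⟩ := hw
        refine Or.inr ⟨⟨Finset.mem_univ _, hA w hw3 (lemA hM hU.toLeg0 hw2 hw3 (hpar w hw3).1
          (hpar w hw3).2 hw1)⟩, ?_⟩
        intro hpU
        rcases hU.closed _ hpU w (hpar w hw3).1.symm with h1 | h1
        · exact hw2 h1
        · exact hw3 h1.2
      · simp only [Finset.mem_filter, mem_neighborFinset] at hx
        by_cases hxb : x = b
        · exact Or.inl hxb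
        · refine Or.inr ⟨⟨Finset.mem_univ _, ?_⟩, hx.2⟩
          have e1 : ¬ 3 ≤ T.degree x := fun h3 => lemM hM hb hmin hW h3 hxb hx.1
          have e2 : T.degree x ≠ 1 := fun h1 => lemB hM hW.toLeg0 hb3 h1 hx.1.ne.symm hx.1
          have := hpos x
          omega
    · rw [Finset.disjoint_left]
      intro x hx hx'
      obtain ⟨w, hw, rfl⟩ := Finset.mem_image.1 hx
      simp only [Finset.mem_filter, mem_neighborFinset] at hw hx'
      obtain ⟨hw1, hw2, hw3⟩ := hw
      exact lemC hM hU.toLeg0 hW hb3 huv hw2 hw3 (hpar w hw3).1 (hpar w hw3).2 hw1 hx'.1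
  have half2 : ((G.neighborFinset v).filter fun w => w ∈ U).card
      + ((G.neighborFinset u).filter fun w => ¬ (w ∉ U ∧ w ≠ b)).card
      ≤ (D.filter fun w => w ∈ U).card + 1 := by
    have hUb : ∀ w, w ∈ U → w ≠ b := by rintro w hw rfl; exact hU.hb hw
    have hA3 : ∀ w, w ∈ U → G.Adj v w → T.degree (par w) < 3 := fun w hw hvw =>
      lemA hM hW.toLeg0 (hdis w hw) (hUb w hw) (hpar w (hUb w hw)).1 (hpar w (hUb w hw)).2 hvw
    have e : (((G.neighborFinset v).filter fun w => w ∈ U).image par).card =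
        ((G.neighborFinset v).filter fun w => w ∈ U).card := by
      apply Finset.card_image_of_injOn
      intro w hw w' hw' he
      simp only [Finset.coe_filter, mem_neighborFinset, Set.mem_setOf_eq] at hw hw'
      exact hinj w w' (hUb w hw.2) (hUb w' hw'.2) (hA3 w hw.2 hw.1) he
    rw [← e, ← Finset.card_union_of_disjoint]
    · refine le_trans (Finset.card_le_card (t := insert b (D.filter fun w => w ∈ U)) ?_)
        (Finset.card_insert_le _ _)
      intro x hx
      rw [Finset.mem_union] at hx
      rw [Finset.mem_insert, Finset.mem_filter, hD, Finset.mem_filter]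
      rcases hx with hx | hx
      · obtain ⟨w, hw, rfl⟩ := Finset.mem_image.1 hx
        simp only [Finset.mem_filter, mem_neighborFinset] at hw
        obtain ⟨hw1, hw2⟩ := hw
        have h3 := hA3 w hw2 hw1
        refine Or.inr ⟨⟨Finset.mem_univ _, hA w (hUb w hw2) h3⟩, ?_⟩
        rcases hU.closed w hw2 _ (hpar w (hUb w hw2)).1 with h1 | h1
        · exact h1
        · rw [h1.2] at h3; omega
      · simp only [Finset.mem_filter, mem_neighborFinset] at hx
        by_cases hxb : x = b
        · exact Or.inl hxb
        · have hxU : x ∈ U := by by_contra h; exact hx.2 ⟨h, hxb⟩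
          exact Or.inr ⟨⟨Finset.mem_univ _, hU.dU x hxU hx.1.ne.symm⟩, hxU⟩
    · rw [Finset.disjoint_left]
      intro x hx hx'
      obtain ⟨w, hw, rfl⟩ := Finset.mem_image.1 hx
      simp only [Finset.mem_filter, mem_neighborFinset] at hw hx'
      obtain ⟨hw1, hw2⟩ := hw
      exact lemC hM hW.toLeg0 hU hb3 huv.symm (hdis w hw2) (hUb w hw2) (hpar w (hUb w hw2)).1
        (hpar w (hUb w hw2)).2 hw1 hx'.1
  have s1 := Finset.card_filter_add_card_filter_not (s := G.neighborFinset u)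
    (fun w => w ∉ U ∧ w ≠ b)
  have s2 := Finset.card_filter_add_card_filter_not (s := G.neighborFinset v) (fun w => w ∈ U)
  have s3 := Finset.card_filter_add_card_filter_not (s := D) (fun w => w ∈ U)
  have s4 := cost_d2 T
  rw [← hD] at s4
  rw [← card_neighborFinset_eq_degree, ← card_neighborFinset_eq_degree]
  omega

end

theorem exists_min [Fintype V] {G : SimpleGraph V} (hG : G.Connected) : ∃ T, IsMin G T := by
  have hne : ∃ n, ∃ T : SimpleGraph V, T ≤ G ∧ T.IsTree ∧ cost T = n := by
    obtain ⟨T, h1, h2⟩ := hG.exists_isTree_le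
    exact ⟨_, T, h1, h2, rfl⟩
  obtain ⟨T, h1, h2, h3⟩ := Nat.find_spec hne
  exact ⟨T, h2, h1, fun T' h1 h2 => h3 ▸ Nat.find_min' hne ⟨T', h2, h1, rfl⟩⟩

theorem main [Fintype V] (k : ℕ) (hk : 1 ≤ k) (G : SimpleGraph V) (hG : G.Connected)
    (hσ : ∀ u v : V, u ≠ v → ¬G.Adj u v →
      Fintype.card V - k ≤ G.degree u + G.degree v) :
    ∃ T : SimpleGraph V, T ≤ G ∧ T.IsTree ∧
      (leafSet T).card + (branchSet T).card ≤ k + 2 := by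
  obtain ⟨T0, hT0⟩ := exists_min hG
  by_cases hc : cost T0 ≤ k + 2
  · exact ⟨T0, hT0.le, hT0.tree, (cost_le T0).trans hc⟩
  exfalso
  obtain ⟨b0, hb0⟩ := exists_terminal hT0.tree (by omega)
  have hne : ∃ n, ∃ (T : SimpleGraph V) (b : V), IsMin G T ∧ Terminal T b ∧ T.degree b = n :=
    ⟨_, T0, b0, hT0, hb0, rfl⟩
  obtain ⟨T, b, hT, hb, hd⟩ := Nat.find_spec hne
  obtain ⟨u, v, huv, hn, hle⟩ := count hT hb
    (fun T' b' h1 h2 => hd ▸ Nat.find_min' hne ⟨T', b', h1, h2, rfl⟩)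
  have h1 := hσ u v huv hn
  have h2 := hT0.min T hT.tree hT.le
  have h3 := cost_d2 T
  omega

end SpanTree

/-- If `k ≥ 1` and `G` is a connected `K_{1,4}`-free graph of order `n` in which
every pair of non-adjacent vertices has degree sum at least `n - k`, then `G` has a spanning
tree with at most `k+2` leaves and branch vertices in total. -/
theorem stmt1 {V : Type*} [Fintype V] (k : ℕ) (hk : 1 ≤ k)
    (G : SimpleGraph V) (hG : G.Connected) (hK : K14Free G)
    (hσ : ∀ u v : V, u ≠ v → ¬G.Adj u v →
      Fintype.card V - k ≤ G.degree u + G.degree v) :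
    ∃ T : SimpleGraph V, T ≤ G ∧ T.IsTree ∧
      (leafSet T).card + (branchSet T).card ≤ k + 2 := by
  exact SpanTree.main k hk G hG hσ
end

section
/- Let k be a non-negative integer and let G be a connected K_{1,4}-free simple graph of order n. If every independent set of k+3 vertices in G has degree sum at least n−k, then G has a spanning tree T with |L(T)| + |B(T)| ≤ 2k+3, i.e., with at most 2k+3 leaves and branch vertices in total. -/
open SimpleGraph Finset List

open scoped Classical

variable {V : Type*}

/-- The set S is one of the two sides of the tree T after removal of an edge. -/
def Cut (T : SimpleGraph V) (x x' : V) (S : Set V) : Prop :=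
  T.Adj x x' ∧ x ∉ S ∧ x' ∈ S ∧ ∀ a ∈ S, ∀ b, b ∉ S → T.Adj a b → a = x' ∧ b = x

/-- The graph T with one edge removed and one edge added. -/
def exch (T : SimpleGraph V) (x x' c d : V) : SimpleGraph V where
  Adj v w := v ≠ w ∧ ((T.Adj v w ∧ ¬ ((v = x ∧ w = x') ∨ (v = x' ∧ w = x))) ∨
    ((v = c ∧ w = d) ∨ (v = d ∧ w = c)))
  symm := ⟨by
    intro v w h
    have := T.adj_comm v w
    grind⟩
  loopless := ⟨by intro v h; exact h.1 rfl⟩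

theorem exch_adj (T : SimpleGraph V) (x x' c d v w : V) :
    (exch T x x' c d).Adj v w ↔ v ≠ w ∧ ((T.Adj v w ∧ ¬ ((v = x ∧ w = x') ∨ (v = x' ∧ w = x))) ∨
    ((v = c ∧ w = d) ∨ (v = d ∧ w = c))) := Iff.rfl

theorem conn_ind {T : SimpleGraph V} (hT : T.Connected) (P : V → Prop) (a : V) (ha : P a)
    (h : ∀ v w, T.Adj v w → P v → P w) (v : V) : P v := by
  obtain ⟨p⟩ := hT.preconnected a v
  induction p with
  | nil => exact ha
  | cons hadj p ih => exact ih (h _ _ hadj ha)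

theorem lip {T : SimpleGraph V} (hT : T.Connected) (f : V → ℕ)
    (h : ∀ v w, T.Adj v w → f w ≤ f v + 1) (r v : V) : f v ≤ f r + T.dist r v := by
  obtain ⟨p, hp⟩ := hT.exists_walk_length_eq_dist r v
  rw [← hp]
  clear hp
  induction p with
  | nil => simp
  | cons hadj p ih =>
    have := h _ _ hadj
    simp only [Walk.length_cons]
    omega

theorem Cut.compl {T : SimpleGraph V} {x x' : V} {S : Set V} (h : Cut T x x' S) :
    Cut T x' x Sᶜ := by
  obtain ⟨h1, h2, h3, h4⟩ := h
  refine ⟨h1.symm, by simpa using h3, h2, ?_⟩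
  intro a ha b hb hab
  have := h4 b (by simpa using hb) a ha hab.symm
  exact ⟨this.2, this.1⟩

theorem Cut.unique {T : SimpleGraph V} (hT : T.Connected) {x a b : V} {S S' : Set V}
    (h : Cut T x a S) (h' : Cut T x b S') {v : V} (hv : v ∈ S) (hv' : v ∈ S') :
    a = b ∧ S = S' := by
  obtain ⟨h1, h2, h3, h4⟩ := h
  obtain ⟨h1', h2', h3', h4'⟩ := h'
  have hab : a = b := by
    by_contra hne
    have := conn_ind hT (fun w => w ∈ S ∧ w ∈ S') v ⟨hv, hv'⟩ (by
      intro p q hpq ⟨hp, hp'⟩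
      have := h4 p hp q
      have := h4' p hp' q
      have := h4' a
      have := h4 b
      grind) x
    exact h2 this.1
  subst hab
  refine ⟨rfl, ?_⟩
  have key : ∀ w, (w ∈ S ↔ w ∈ S') := by
    refine conn_ind hT (fun w => (w ∈ S ↔ w ∈ S')) x (by tauto) ?_
    intro p q hpq hp
    have := h4 p
    have := h4' p
    have := h4 q
    have := h4' q
    have := hpq.symm
    grind
  ext w
  exact key w

theorem Cut.disj {T : SimpleGraph V} (hT : T.Connected) {x a b : V} {S S' : Set V}
    (h : Cut T x a S) (h' : Cut T x b S') (hab : a ≠ b) {v : V} (hv : v ∈ S) : v ∉ S' :=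
  fun hv' => hab (h.unique hT h' hv hv').1

theorem exists_cut_adj {T : SimpleGraph V} (hT : T.IsTree) {x a : V} (hxa : T.Adj x a) :
    ∃ S, Cut T x a S := by
  have hb := (isAcyclic_iff_forall_adj_isBridge.1 hT.isAcyclic) hxa
  rw [isBridge_iff] at hb
  refine ⟨{v | (T \ fromEdgeSet {s(x, a)}).Reachable a v}, hxa, ?_, ?_, ?_⟩
  · intro h
    exact hb h.symm
  · exact Reachable.refl _
  · intro p hp q hq hpq
    by_contra hne
    apply hq
    by_cases hpq2 : s(p, q) = s(x, a)
    · rw [Sym2.eq_iff] at hpq2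
      rcases hpq2 with ⟨rfl, rfl⟩ | ⟨rfl, rfl⟩
      · exact absurd hp (fun h => hb (Reachable.symm h))
      · exact absurd ⟨rfl, rfl⟩ hne
    · refine Reachable.trans hp (Adj.reachable ?_)
      simp only [sdiff_adj, fromEdgeSet_adj, Set.mem_singleton_iff]
      exact ⟨hpq, fun h => hpq2 h.1⟩

theorem exists_cut {T : SimpleGraph V} (hT : T.IsTree) {x u : V} (hxu : x ≠ u) :
    ∃ a S, Cut T x a S ∧ u ∈ S := by
  have key : ∀ v, v = x ∨ ∃ a S, Cut T x a S ∧ v ∈ S := by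
    refine conn_ind hT.connected (fun v => v = x ∨ ∃ a S, Cut T x a S ∧ v ∈ S) x (Or.inl rfl) ?_
    intro v w hvw hv
    by_cases hwx : w = x
    · exact Or.inl hwx
    right
    rcases hv with rfl | ⟨a, S, hS, hv⟩
    · obtain ⟨S, hS⟩ := exists_cut_adj hT hvw
      exact ⟨w, S, hS, hS.2.2.1⟩
    · refine ⟨a, S, hS, ?_⟩
      by_contra hw
      exact hwx (hS.2.2.2 v hv w hw hvw).2
  rcases key u with h | h
  · exact absurd h.symm hxu
  · exact h

theorem cut_dist {T : SimpleGraph V} (hT : T.Connected) {x a : V} {S : Set V}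
    (h : Cut T x a S) {r : V} (hr : r ∈ S) : T.dist r x = T.dist r a + 1 := by
  obtain ⟨h1, h2, h3, h4⟩ := h
  apply le_antisymm
  · have := lip hT (fun v => T.dist r v) (by
      intro v w hvw
      exact hT.dist_triangle.trans (by rw [dist_eq_one_iff_adj.2 hvw])) a x
    rw [dist_eq_one_iff_adj.2 h1.symm] at this
    exact this
  · have := lip hT (fun v => if v ∈ S then T.dist a v + 1 else 0) (by
      intro v w hvw
      have h5 : T.dist a w ≤ T.dist a v + 1 :=
        hT.dist_triangle.trans (by rw [dist_eq_one_iff_adj.2 hvw])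
      by_cases hw : w ∈ S
      · by_cases hv : v ∈ S
        · simp only [hw, hv, if_true]; omega
        · have := h4 w hw v hv hvw.symm
          obtain ⟨rfl, rfl⟩ := this
          simp [hw, hv]
      · simp [hw]) x r
    simp only [hr, h2, if_true, if_false] at this
    rw [T.dist_comm, T.dist_comm (u := r) (v := x)]
    omega

theorem dist_adj {T : SimpleGraph V} (hT : T.Connected) (r : V) {v w : V} (hvw : T.Adj v w) :
    T.dist r w ≤ T.dist r v + 1 :=
  hT.dist_triangle.trans (by rw [dist_eq_one_iff_adj.2 hvw])

theorem exch_connected {T : SimpleGraph V} (hT : T.Connected) {x x' c d : V} {S : Set V}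
    (h : Cut T x x' S) (hc : c ∈ S) (hd : d ∉ S) : (exch T x x' c d).Connected := by
  obtain ⟨h1, h2, h3, h4⟩ := h
  have key : ∀ v, (v ∈ S → (exch T x x' c d).Reachable x' v) ∧
      (v ∉ S → (exch T x x' c d).Reachable x v) := by
    refine conn_ind hT (fun v => (v ∈ S → (exch T x x' c d).Reachable x' v) ∧
      (v ∉ S → (exch T x x' c d).Reachable x v)) x ⟨fun h => absurd h h2, fun _ => Reachable.refl _⟩ ?_
    intro v w hvw ⟨hv1, hv2⟩
    have hsame : (v ∈ S ↔ w ∈ S) → (exch T x x' c d).Reachable v w := by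
      intro hs
      apply Adj.reachable
      rw [exch_adj]
      have := hvw.ne
      grind
    refine ⟨fun hw => ?_, fun hw => ?_⟩
    · by_cases hv : v ∈ S
      · exact (hv1 hv).trans (hsame (by tauto))
      · rw [(h4 w hw v hv hvw.symm).1]
    · by_cases hv : v ∈ S
      · rw [(h4 v hv w hw hvw).2]
      · exact (hv2 hv).trans (hsame (by tauto))
  have hcd : (exch T x x' c d).Adj c d := by
    rw [exch_adj]
    refine ⟨?_, by simp⟩
    rintro rfl
    exact hd hc
  have hxx : (exch T x x' c d).Reachable x x' :=
    ((key d).2 hd).trans (hcd.symm.reachable.trans ((key c).1 hc).symm)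
  have : Nonempty V := ⟨x⟩
  rw [connected_iff_exists_forall_reachable]
  refine ⟨x, fun v => ?_⟩
  by_cases hv : v ∈ S
  · exact hxx.trans ((key v).1 hv)
  · exact (key v).2 hv

theorem exch_degree [Fintype V] {T : SimpleGraph V} {x x' c d : V} {S : Set V}
    (h : Cut T x x' S) (hc : c ∈ S) (hd : d ∉ S) (v : V) :
    (exch T x x' c d).degree v + (if v = x then 1 else 0) + (if v = x' then 1 else 0) =
      T.degree v + (if v = c then 1 else 0) + (if v = d then 1 else 0) := by
  obtain ⟨h1, h2, h3, h4⟩ := h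
  have hdeg : ∀ (H : SimpleGraph V), H.degree v = ∑ w, if H.Adj v w then 1 else 0 := by
    intro H
    rw [← card_neighborFinset_eq_degree, neighborFinset_eq_filter, Finset.card_filter]
  have hind : ∀ a b : V, (if v = a then 1 else 0) = ∑ w, if v = a ∧ w = b then 1 else 0 := by
    intro a b
    by_cases hva : v = a <;> simp [hva]
  rw [hdeg, hdeg, hind x x', hind x' x, hind c d, hind d c, ← Finset.sum_add_distrib,
    ← Finset.sum_add_distrib, ← Finset.sum_add_distrib, ← Finset.sum_add_distrib]
  apply Finset.sum_congr rfl
  intro w _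
  rw [exch_adj]
  have e1 := h4 v
  have e2 := h4 w
  have e3 := T.adj_comm v w
  have e4 : T.Adj v w → v ≠ w := fun h => h.ne
  split_ifs <;> grind

theorem exch_tree [Fintype V] {T : SimpleGraph V} (hT : T.IsTree) {x x' c d : V} {S : Set V}
    (h : Cut T x x' S) (hc : c ∈ S) (hd : d ∉ S) : (exch T x x' c d).IsTree := by
  rw [isTree_iff_connected_and_card]
  refine ⟨exch_connected hT.connected h hc hd, ?_⟩
  have h1 := (isTree_iff_connected_and_card.1 hT).2
  rw [← h1]
  rw [Nat.card_eq_fintype_card, Nat.card_eq_fintype_card, ← edgeFinset_card, ← edgeFinset_card]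
  have h2 := T.sum_degrees_eq_twice_card_edges
  have h3 := (exch T x x' c d).sum_degrees_eq_twice_card_edges
  have h4 := Finset.sum_congr (rfl : (Finset.univ : Finset V) = Finset.univ)
    (fun v _ => exch_degree h hc hd v)
  simp only [Finset.sum_add_distrib, Finset.sum_ite_eq', Finset.mem_univ, if_true] at h4
  omega

theorem exch_le {G T : SimpleGraph V} (hT : T ≤ G) {x x' c d : V} (hcd : G.Adj c d) :
    exch T x x' c d ≤ G := by
  intro v w hvw
  rw [exch_adj] at hvw
  rcases hvw.2 with h | ⟨rfl, rfl⟩ | ⟨rfl, rfl⟩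
  · exact hT h.1
  · exact hcd
  · exact hcd.symm

theorem exists_leaf_side [Fintype V] {T : SimpleGraph V} (hT : T.IsTree) (m : ℕ) :
    ∀ (x a : V) (S : Set V), Cut T x a S → S.ncard ≤ m → ∃ v ∈ S, T.degree v = 1 := by
  induction m with
  | zero =>
    intro x a S h hm
    have : S = ∅ := by
      rw [← Set.ncard_eq_zero (Set.toFinite S)]; omega
    rw [this] at h
    exact absurd h.2.2.1 (by simp)
  | succ m ih =>
    intro x a S h hm
    by_cases hd : T.degree a = 1
    · exact ⟨a, h.2.2.1, hd⟩
    have hpos : 0 < T.degree a := by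
      rw [degree_pos_iff_exists_adj]; exact ⟨x, h.1.symm⟩
    have h2 : 1 < (T.neighborFinset a).card := by
      rw [card_neighborFinset_eq_degree]; omega
    obtain ⟨b, hb, hbx⟩ := Finset.exists_mem_ne h2 x
    rw [mem_neighborFinset] at hb
    obtain ⟨W, hW⟩ := exists_cut_adj hT hb
    have hsub : W ⊆ S := by
      intro v hv
      have := hW.disj hT.connected h.compl hbx hv
      simpa using this
    have hlt : W.ncard < S.ncard := by
      apply Set.ncard_lt_ncard _ (Set.toFinite S)
      refine ⟨hsub, fun hss => hW.2.1 (hss h.2.2.1)⟩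
    obtain ⟨v, hv, hv1⟩ := ih a b W hW (by omega)
    exact ⟨v, hsub hv, hv1⟩

theorem cut_leaf [Fintype V] {T : SimpleGraph V} (hT : T.IsTree) {x a : V} {S : Set V}
    (h : Cut T x a S) : ∃ v ∈ S, T.degree v = 1 :=
  exists_leaf_side hT _ x a S h le_rfl

/-- `T` is a spanning tree of `G` with the minimum number of leaves. -/
def GoodTree [Fintype V] (G T : SimpleGraph V) : Prop :=
  T ≤ G ∧ T.IsTree ∧ ∀ T', T' ≤ G → T'.IsTree → (leafSet T).card ≤ (leafSet T').card

theorem mem_leafSet [Fintype V] {T : SimpleGraph V} {v : V} :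
    v ∈ leafSet T ↔ T.degree v = 1 := by simp [leafSet]

theorem mem_branchSet [Fintype V] {T : SimpleGraph V} {v : V} :
    v ∈ branchSet T ↔ 3 ≤ T.degree v := by simp [branchSet]

theorem two_nbrs [Fintype V] {T : SimpleGraph V} {z a b : V} (ha : T.Adj z a) (hb : T.Adj z b)
    (hab : a ≠ b) : 2 ≤ T.degree z := by
  rw [← card_neighborFinset_eq_degree, ← Finset.card_pair hab]
  apply Finset.card_le_card
  intro v hv
  simp only [Finset.mem_insert, Finset.mem_singleton] at hv
  rw [mem_neighborFinset]
  rcases hv with rfl | rfl <;> assumption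

theorem three_nbrs [Fintype V] {T : SimpleGraph V} {z a b c : V} (ha : T.Adj z a)
    (hb : T.Adj z b) (hc : T.Adj z c) (hab : a ≠ b) (hac : a ≠ c) (hbc : b ≠ c) :
    3 ≤ T.degree z := by
  rw [← card_neighborFinset_eq_degree, ← Finset.card_eq_three.2 ⟨a, b, c, hab, hac, hbc, rfl⟩]
  apply Finset.card_le_card
  intro v hv
  simp only [Finset.mem_insert, Finset.mem_singleton] at hv
  rw [mem_neighborFinset]
  rcases hv with rfl | rfl | rfl <;> assumption

theorem leaf_nbr [Fintype V] {T : SimpleGraph V} {z a b : V} (hz : T.degree z = 1)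
    (ha : T.Adj z a) (hb : T.Adj z b) : a = b := by
  by_contra h
  have := two_nbrs ha hb h
  omega

theorem leaf_side [Fintype V] {T : SimpleGraph V} (hT : T.IsTree) {x y v : V} {S : Set V}
    (h : Cut T x y S) (hy : T.degree y = 1) (hv : v ∈ S) : v = y := by
  by_contra hne
  obtain ⟨a, R, hR, hvR⟩ := exists_cut hT (Ne.symm hne)
  have hax := leaf_nbr hy hR.1 h.1.symm
  subst hax
  have := (hR.unique hT.connected h.compl hR.2.2.1 h.2.1).2
  rw [this] at hvR
  exact hvR hv

theorem exists_sep [Fintype V] {T : SimpleGraph V} (hT : T.IsTree) {u v : V} (huv : u ≠ v)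
    (hu : T.degree u = 1) (hv : T.degree v = 1) {b : V} (hb : 3 ≤ T.degree b) :
    ∃ a a' S, Cut T a a' S ∧ 3 ≤ T.degree a ∧ ((u ∈ S ∧ v ∉ S) ∨ (v ∈ S ∧ u ∉ S)) := by
  by_contra hno
  have hX : ∀ z, ∃ a S, Cut T z a S ∧ ((u ∈ S ∧ v ∉ S) ∨ (v ∈ S ∧ u ∉ S)) := by
    refine conn_ind hT.connected
      (fun z => ∃ a S, Cut T z a S ∧ ((u ∈ S ∧ v ∉ S) ∨ (v ∈ S ∧ u ∉ S))) u ?_ ?_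
    · obtain ⟨a, S, hS, hvS⟩ := exists_cut hT huv
      exact ⟨a, S, hS, Or.inr ⟨hvS, hS.2.1⟩⟩
    · have aux : ∀ u v : V, T.degree v = 1 → ∀ z w, T.Adj z w → T.degree z < 3 →
          ∀ a S, Cut T z a S → u ∈ S → v ∉ S → ∃ S, Cut T w z S ∧
          ((u ∈ S ∧ v ∉ S) ∨ (v ∈ S ∧ u ∉ S)) := by
        intro u v hv z w hzw hz a S hS huS hvS
        by_cases hwa : w = a
        · subst hwa
          exact ⟨Sᶜ, hS.compl, Or.inr ⟨hvS, fun h => h huS⟩⟩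
        have hzv : z ≠ v := by
          rintro rfl
          exact hwa (leaf_nbr hv hzw hS.1)
        obtain ⟨c, S', hS', hvS'⟩ := exists_cut hT hzv
        have hca : c ≠ a := by
          rintro rfl
          have := (hS.unique hT.connected hS' hS.2.2.1 hS'.2.2.1).2
          rw [this] at hvS
          exact hvS hvS'
        have hwc : w = c := by
          by_contra hwc
          have := three_nbrs hzw hS.1 hS'.1 hwa hwc (Ne.symm hca)
          omega
        subst hwc
        have huS' : u ∉ S' := hS.disj hT.connected hS' (Ne.symm hwa) huS
        exact ⟨S'ᶜ, hS'.compl, Or.inl ⟨huS', fun h => h hvS'⟩⟩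
      rintro z w hzw ⟨a, S, hS, h⟩
      have hz : T.degree z < 3 := by
        by_contra hz
        exact hno ⟨z, a, S, hS, by omega, h⟩
      rcases h with ⟨h1, h2⟩ | ⟨h1, h2⟩
      · obtain ⟨S', h1, h2⟩ := aux u v hv z w hzw hz a S hS h1 h2
        exact ⟨z, S', h1, h2⟩
      · obtain ⟨S', h1, h2⟩ := aux v u hu z w hzw hz a S hS h1 h2
        exact ⟨z, S', h1, h2.symm⟩
  obtain ⟨a, S, hS, h⟩ := hX b
  exact hno ⟨b, a, S, hS, hb, h⟩

theorem leaves_indep [Fintype V] {G T : SimpleGraph V}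
    (hB : ∀ T', T' ≤ G → T'.IsTree → (branchSet T').Nonempty) (hT : GoodTree G T) {u v : V}
    (hu : u ∈ leafSet T) (hv : v ∈ leafSet T) : ¬ G.Adj u v := by
  intro hadj
  obtain ⟨hTG, htree, hmin⟩ := hT
  have huv := hadj.ne
  obtain ⟨b, hb⟩ := hB T hTG htree
  have hu' := mem_leafSet.1 hu
  have hv' := mem_leafSet.1 hv
  obtain ⟨a, a', S, hS, ha, hsep⟩ := exists_sep htree huv hu' hv' (mem_branchSet.1 hb)
  have aux : ∀ u v, u ∈ leafSet T → v ∈ leafSet T → G.Adj u v → u ∈ S → v ∉ S → False := by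
    intro u v hu hv hadj h1 h2
    have ht := exch_tree htree hS h1 h2
    have hle := exch_le (x := a) (x' := a') hTG hadj
    have := hmin _ hle ht
    have hsub : leafSet (exch T a a' u v) ⊆ insert a' ((leafSet T).erase u |>.erase v) := by
      intro w hw
      rw [mem_leafSet] at hw
      have hd := exch_degree hS h1 h2 w
      have hu' := mem_leafSet.1 hu
      have hv' := mem_leafSet.1 hv
      have := hadj.ne
      simp only [Finset.mem_insert, Finset.mem_erase, mem_leafSet]
      by_cases hwa : w = a'
      · exact Or.inl hwa
      right
      by_cases hwx : w = a
      · subst hwx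
        simp only [hwa, if_true, if_false] at hd
        refine ⟨?_, ?_, ?_⟩
        · rintro rfl; omega
        · rintro rfl; omega
        · exfalso
          have h1 : w ≠ u := by rintro rfl; omega
          have h2 : w ≠ v := by rintro rfl; omega
          simp only [h1, h2, if_false] at hd
          omega
      · simp only [hwa, hwx, if_false] at hd
        refine ⟨?_, ?_, ?_⟩
        · rintro rfl; simp at hd; split_ifs at hd <;> omega
        · rintro rfl; simp at hd; split_ifs at hd <;> omega
        · have h1 : w ≠ u := by rintro rfl; simp at hd; omega
          have h2 : w ≠ v := by rintro rfl; simp at hd; split_ifs at hd <;> omega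
          simp only [h1, h2, if_false] at hd
          omega
    have h3 := Finset.card_le_card hsub
    have h4 := Finset.card_insert_le a' ((leafSet T).erase u |>.erase v)
    have h5 := Finset.card_erase_of_mem hu
    have h6 := Finset.card_erase_of_mem (Finset.mem_erase.2 ⟨hadj.ne.symm, hv⟩)
    have h7 : 1 < (leafSet T).card := Finset.one_lt_card.2 ⟨u, hu, v, hv, hadj.ne⟩
    omega
  rcases hsep with ⟨h1, h2⟩ | ⟨h1, h2⟩
  · exact aux u v hu hv hadj h1 h2
  · exact aux v u hv hu hadj.symm h1 h2

theorem opB_degree [Fintype V] {T : SimpleGraph V} {x x' u : V} {S : Set V}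
    (hS : Cut T x x' S) (huS : u ∈ S) (v : V) :
    (exch T x x' u x).degree v + (if v = x' then 1 else 0) =
      T.degree v + (if v = u then 1 else 0) := by
  have := exch_degree hS huS hS.2.1 v
  omega

theorem opB [Fintype V] {G T : SimpleGraph V} (hT : GoodTree G T) {x x' u : V} {S : Set V}
    (hS : Cut T x x' S) (huS : u ∈ S) (hu : u ∈ leafSet T) (hxu : G.Adj x u) :
    GoodTree G (exch T x x' u x) ∧ leafSet (exch T x x' u x) = insert x' ((leafSet T).erase u) ∧
      T.degree x' ≤ 2 ∧ x' ∉ (leafSet T).erase u := by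
  obtain ⟨hTG, htree, hmin⟩ := hT
  have ht := exch_tree htree hS huS hS.2.1
  have hle := exch_le (x := x) (x' := x') hTG hxu.symm
  have hm := hmin _ hle ht
  have hdeg := opB_degree hS huS
  have hu' := mem_leafSet.1 hu
  have hcard := Finset.card_erase_of_mem hu
  have hpos : 0 < (leafSet T).card := Finset.card_pos.2 ⟨u, hu⟩
  have hsub : leafSet (exch T x x' u x) ⊆ insert x' ((leafSet T).erase u) := by
    intro w hw
    rw [mem_leafSet] at hw
    have hd := hdeg w
    simp only [Finset.mem_insert, Finset.mem_erase, mem_leafSet]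
    by_cases hwa : w = x'
    · exact Or.inl hwa
    right
    simp only [hwa, if_false] at hd
    have h1 : w ≠ u := by rintro rfl; simp at hd; omega
    simp only [h1, if_false] at hd
    exact ⟨h1, by omega⟩
  have hx2 : x' ∉ (leafSet T).erase u := by
    intro h
    rw [Finset.insert_eq_self.2 h] at hsub
    have := Finset.card_le_card hsub
    omega
  have hx'mem : x' ∈ leafSet (exch T x x' u x) := by
    by_contra hx'
    have : leafSet (exch T x x' u x) ⊆ (leafSet T).erase u := by
      intro w hw
      rcases Finset.mem_insert.1 (hsub hw) with rfl | h
      · exact absurd hw hx'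
      · exact h
    have := Finset.card_le_card this
    omega
  have heq : leafSet (exch T x x' u x) = insert x' ((leafSet T).erase u) := by
    apply Finset.eq_of_subset_of_card_le hsub
    rw [Finset.card_insert_of_notMem hx2]
    omega
  refine ⟨⟨hle, ht, ?_⟩, heq, ?_, hx2⟩
  · intro T' h1 h2
    have := hmin T' h1 h2
    rw [heq, Finset.card_insert_of_notMem hx2]
    omega
  · have h1 := hdeg x'
    rw [mem_leafSet] at hx'mem
    split_ifs at h1 <;> omega

theorem opB_indep [Fintype V] {G T : SimpleGraph V}
    (hB : ∀ T', T' ≤ G → T'.IsTree → (branchSet T').Nonempty)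
    (hT : GoodTree G T) {x x' u w : V} {S : Set V}
    (hS : Cut T x x' S) (huS : u ∈ S) (hu : u ∈ leafSet T) (hxu : G.Adj x u)
    (hw : w ∈ leafSet T) (hwu : w ≠ u) : ¬ G.Adj x' w := by
  obtain ⟨h1, h2, -, -⟩ := opB hT hS huS hu hxu
  apply leaves_indep hB h1
  · rw [h2]; exact Finset.mem_insert_self _ _
  · rw [h2]; exact Finset.mem_insert_of_mem (Finset.mem_erase.2 ⟨hwu, hw⟩)

theorem cut_exch {T : SimpleGraph V} {x x' c d p q : V} {W : Set V} (h : Cut T p q W)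
    (hcd : c ∈ W ↔ d ∈ W) (hne : ¬ ((p = x ∧ q = x') ∨ (p = x' ∧ q = x))) :
    Cut (exch T x x' c d) p q W := by
  obtain ⟨h1, h2, h3, h4⟩ := h
  refine ⟨?_, h2, h3, ?_⟩
  · rw [exch_adj]
    exact ⟨h1.ne, Or.inl ⟨h1, hne⟩⟩
  · intro a ha b hb hab
    rw [exch_adj] at hab
    rcases hab.2 with h | ⟨rfl, rfl⟩ | ⟨rfl, rfl⟩
    · exact h4 a ha b hb h.1
    · tauto
    · tauto

theorem same_next [Fintype V] {G T : SimpleGraph V}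
    (hB : ∀ T', T' ≤ G → T'.IsTree → (branchSet T').Nonempty) (hK : K14Free G)
    (hT : GoodTree G T) {x x' u₁ u₂ : V} {S : Set V}
    (hS : Cut T x x' S) (h1S : u₁ ∈ S) (h2S : u₂ ∈ S) (h1 : u₁ ∈ leafSet T)
    (h2 : u₂ ∈ leafSet T) (hx1 : G.Adj x u₁) (hx2 : G.Adj x u₂) : u₁ = u₂ := by
  by_contra hne
  have htree := hT.2.1
  have hconn := htree.connected
  have hxl : T.degree x ≠ 1 := fun h => leaves_indep hB hT (mem_leafSet.2 h) h1 hx1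
  have hpos : 0 < T.degree x := by
    rw [degree_pos_iff_exists_adj]; exact ⟨x', hS.1⟩
  have hcard : 1 < (T.neighborFinset x).card := by
    rw [card_neighborFinset_eq_degree]; omega
  obtain ⟨w, hw, hwx⟩ := Finset.exists_mem_ne hcard x'
  rw [mem_neighborFinset] at hw
  obtain ⟨W, hW⟩ := exists_cut_adj htree hw
  have hdis : ∀ v ∈ S, v ∉ W := fun v hv => hS.disj hconn hW (Ne.symm hwx) hv
  obtain ⟨hT', hL', -, hx'1⟩ := opB hT hS h1S h1 hx1
  obtain ⟨-, -, -, hx'2⟩ := opB hT hS h2S h2 hx2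
  have hx'u1 : x' ≠ u₁ := by
    rintro rfl; exact hx'2 (Finset.mem_erase.2 ⟨hne, h1⟩)
  have hx'u2 : x' ≠ u₂ := by
    rintro rfl; exact hx'1 (Finset.mem_erase.2 ⟨Ne.symm hne, h2⟩)
  have hwS : w ∉ S := fun h => hdis w h hW.2.2.1
  refine hK ⟨x, w, x', u₁, u₂, hwx, ?_, ?_, hx'u1, hx'u2, hne, hT.1 hw, hT.1 hS.1, hx1, hx2,
    ?_, ?_, ?_, ?_, ?_, leaves_indep hB hT h1 h2⟩
  · rintro rfl; exact hwS h1S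
  · rintro rfl; exact hwS h2S
  · intro hadj
    have hcut : Cut (exch T x x' u₁ x) w x Wᶜ := by
      apply cut_exch hW.compl
      · exact ⟨fun _ => hW.2.1, fun _ => hdis _ h1S⟩
      · rintro (⟨h, -⟩ | ⟨h, -⟩)
        · exact hw.ne h.symm
        · exact hwx h
    refine opB_indep hB hT' hcut (hdis _ hS.2.2.1) ?_ hadj (w := u₂) ?_ (Ne.symm hx'u2) hx2
    · rw [hL']; exact Finset.mem_insert_self _ _
    · rw [hL']; exact Finset.mem_insert_of_mem (Finset.mem_erase.2 ⟨Ne.symm hne, h2⟩)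
  · intro hadj
    exact opB_indep hB hT hW.compl (hdis _ h1S) h1 hadj h2 (Ne.symm hne) hx2
  · intro hadj
    exact opB_indep hB hT hW.compl (hdis _ h2S) h2 hadj h1 hne hx1
  · exact opB_indep hB hT hS h2S h2 hx2 h1 hne
  · exact opB_indep hB hT hS h1S h1 hx1 h2 (Ne.symm hne)

/-- Sum of the depths of the leaves of `T` with respect to the root `r`. -/
noncomputable def leafDepth [Fintype V] (T : SimpleGraph V) (r : V) : ℕ :=
  ∑ v ∈ leafSet T, T.dist r v

theorem no_shift [Fintype V] {G T : SimpleGraph V} {r : V}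
    (hT : GoodTree G T) (hr : 3 ≤ T.degree r)
    (hmax : ∀ T', GoodTree G T' → 3 ≤ T'.degree r → leafDepth T' r ≤ leafDepth T r)
    {b b₁ b₂ : V} {W₁ W₂ : Set V} (h1 : Cut T b b₁ W₁) (h2 : Cut T b b₂ W₂) (hne : b₁ ≠ b₂)
    (hb : 3 ≤ T.degree b) (hrb : r ≠ b) (hr1 : r ∉ W₁) (hr2 : r ∉ W₂) : ¬ G.Adj b₁ b₂ := by
  intro hadj
  obtain ⟨hTG, htree, hmin⟩ := hT
  have hconn := htree.connected
  have hb2 : b₂ ∉ W₁ := h2.disj hconn h1 (Ne.symm hne) h2.2.2.1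
  have ht := exch_tree htree h1 h1.2.2.1 hb2
  have hle := exch_le (x := b) (x' := b₁) hTG hadj
  have hdeg : ∀ v, (exch T b b₁ b₁ b₂).degree v + (if v = b then 1 else 0) =
      T.degree v + (if v = b₂ then 1 else 0) := by
    intro v
    have := exch_degree h1 h1.2.2.1 hb2 v
    omega
  have hsub : leafSet (exch T b b₁ b₁ b₂) ⊆ leafSet T := by
    intro v hv
    rw [mem_leafSet] at hv ⊢
    have hd := hdeg v
    have hvb : v ≠ b := by
      rintro rfl; simp at hd; omega
    have hvb2 : v ≠ b₂ := by
      rintro rfl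
      have : 0 < T.degree v := by
        rw [degree_pos_iff_exists_adj]; exact ⟨b, h2.1.symm⟩
      simp [hvb] at hd; omega
    simp only [hvb, hvb2, if_false] at hd
    omega
  have heq := Finset.eq_of_subset_of_card_le hsub (hmin _ hle ht)
  have hgood : GoodTree G (exch T b b₁ b₁ b₂) := by
    refine ⟨hle, ht, ?_⟩
    rw [heq]; exact hmin
  have hrb2 : r ≠ b₂ := by rintro rfl; exact hr2 h2.2.2.1
  have hd := hdeg r
  simp only [hrb, hrb2, if_false] at hd
  have hmx := hmax _ hgood (by omega)
  have hd1 := cut_dist hconn h1.compl (r := r) hr1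
  have hd2 := cut_dist hconn h2.compl (r := r) hr2
  have hlip := lip ht.connected (fun v => T.dist r v + if v ∈ W₁ then 1 else 0) (by
    intro v w hvw
    rw [exch_adj] at hvw
    rcases hvw.2 with ⟨h, hno⟩ | ⟨rfl, rfl⟩ | ⟨rfl, rfl⟩
    · have := dist_adj hconn r h
      have e1 := h1.2.2.2 v
      have e2 := h1.2.2.2 w
      have e3 := h.symm
      have hs : v ∈ W₁ ↔ w ∈ W₁ := by grind
      simp only [hs]; omega
    · simp only [h1.2.2.1, hb2, if_true, if_false]; omega
    · simp only [h1.2.2.1, hb2, if_true, if_false]; omega) r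
  simp only [hr1, if_false, dist_self] at hlip
  obtain ⟨w, hw, hwl⟩ := cut_leaf htree h1
  have : leafDepth T r < leafDepth (exch T b b₁ b₁ b₂) r := by
    unfold leafDepth
    rw [heq]
    apply Finset.sum_lt_sum
    · intro v _
      have := hlip v
      omega
    · refine ⟨w, mem_leafSet.2 hwl, ?_⟩
      have := hlip w
      simp only [hw, if_true] at this
      omega
  omega

theorem no_insert [Fintype V] {G T : SimpleGraph V} {r : V}
    (hT : GoodTree G T) (hr : 3 ≤ T.degree r)
    (hmax : ∀ T', GoodTree G T' → 3 ≤ T'.degree r → leafDepth T' r ≤ leafDepth T r)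
    {b y u : V} {S : Set V} (hS : Cut T b y S) (hrS : r ∈ S) (hb : 3 ≤ T.degree b)
    (huS : u ∈ S) (hu : u ∈ leafSet T) (hbu : G.Adj b u) (huy : u ≠ y)
    {b₁ b₂ : V} {W₁ W₂ : Set V} (h1 : Cut T b b₁ W₁) (h2 : Cut T b b₂ W₂) (hne : b₁ ≠ b₂)
    (hy1 : y ≠ b₁) (hy2 : y ≠ b₂) : ¬ G.Adj y u := by
  intro hadj
  have htree := hT.2.1
  have hconn := htree.connected
  have hu1 := mem_leafSet.1 hu
  obtain ⟨hT', hL', hy, hyL⟩ := opB hT hS huS hu hbu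
  have hdeg' := opB_degree hS huS
  obtain ⟨p, hp⟩ : ∃ p, T.Adj u p := by
    rw [← degree_pos_iff_exists_adj]; omega
  have hub : u ≠ b := hbu.ne.symm
  have hpS : p ∈ S := by
    by_contra hpS
    exact huy (hS.2.2.2 u huS p hpS hp).1
  have hcut : Cut (exch T b y u b) u p (S \ {u}) := by
    refine ⟨?_, by simp, ⟨hpS, by simpa using hp.ne.symm⟩, ?_⟩
    · rw [exch_adj]
      refine ⟨hp.ne, Or.inl ⟨hp, ?_⟩⟩
      rintro (⟨h, -⟩ | ⟨h, -⟩)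
      · exact hub h
      · exact huy h
    · rintro a ⟨haS, hau⟩ c hc hac
      simp only [Set.mem_singleton_iff] at hau
      rw [exch_adj] at hac
      have hbS := hS.2.1
      rcases hac.2 with ⟨h, hno⟩ | ⟨rfl, rfl⟩ | ⟨rfl, rfl⟩
      · by_cases hcu : c = u
        · subst hcu
          exact ⟨leaf_nbr hu1 h.symm hp, rfl⟩
        · exfalso
          have hcS : c ∉ S := fun h' => hc ⟨h', by simpa using hcu⟩
          have := hS.2.2.2 a haS c hcS h
          exact hno (Or.inr this)
      · exact absurd rfl hau
      · exact absurd haS hbS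
  have hyS' : y ∈ S \ {u} := ⟨hS.2.2.1, by simpa using huy.symm⟩
  obtain ⟨hT1, hL1, hp2, hpL⟩ := opB hT' hcut hyS' (by rw [hL']; exact Finset.mem_insert_self _ _)
    hadj.symm
  have hdeg1 := opB_degree hcut hyS'
  rw [hL', Finset.erase_insert hyL] at hL1 hpL
  have hry : r ≠ y := by rintro rfl; omega
  have hru : r ≠ u := by rintro rfl; omega
  have hd' := hdeg' r
  simp only [hry, hru, if_false] at hd'
  have hrp : r ≠ p := by rintro rfl; omega
  have hd1 := hdeg1 r
  simp only [hry, hrp, if_false] at hd1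
  have hmx := hmax _ hT1 (by omega)
  have hdb := cut_dist hconn hS hrS
  have hlip := lip hT1.2.1.connected
    (fun v => if v = u then T.dist r b else T.dist r v + if v ∈ S then 0 else 1) (by
    intro v w hvw
    rw [exch_adj, exch_adj] at hvw
    have hbS := hS.2.1
    have hyS := hS.2.2.1
    rcases hvw.2 with ⟨⟨-, ⟨h, hno⟩ | ⟨rfl, rfl⟩ | ⟨rfl, rfl⟩⟩, hno2⟩ | ⟨rfl, rfl⟩ | ⟨rfl, rfl⟩
    · have := dist_adj hconn r h
      have hvu : v ≠ u := by
        rintro rfl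
        exact hno2 (Or.inl ⟨rfl, leaf_nbr hu1 h hp⟩)
      have hwu : w ≠ u := by
        rintro rfl
        exact hno2 (Or.inr ⟨leaf_nbr hu1 h.symm hp, rfl⟩)
      have e1 := hS.2.2.2 v
      have e2 := hS.2.2.2 w
      have e3 := h.symm
      have hs : v ∈ S ↔ w ∈ S := by grind
      simp only [hs, hvu, hwu, if_false]; omega
    · simp only [hub.symm, hbS, if_true, if_false]; omega
    · simp only [hub.symm, hbS, if_true, if_false]; omega
    · simp only [huy.symm, hyS, if_true, if_false]; omega
    · simp only [huy.symm, hyS, if_true, if_false]; omega) r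
  simp only [hru, hrS, if_true, if_false, dist_self] at hlip
  obtain ⟨w₁, hw₁, hwl₁⟩ := cut_leaf htree h1
  obtain ⟨w₂, hw₂, hwl₂⟩ := cut_leaf htree h2
  have hw₁S : w₁ ∉ S := h1.disj hconn hS hy1.symm hw₁
  have hw₂S : w₂ ∉ S := h2.disj hconn hS hy2.symm hw₂
  have hww : w₁ ≠ w₂ := by
    rintro rfl
    exact h1.disj hconn h2 hne hw₁ hw₂
  have hcnt : 2 ≤ ∑ v ∈ (leafSet T).erase u, (if v ∈ S then 0 else 1) := by
    have hsub : ({w₁, w₂} : Finset V) ⊆ (leafSet T).erase u := by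
      intro v hv
      simp only [Finset.mem_insert, Finset.mem_singleton] at hv
      rw [Finset.mem_erase, mem_leafSet]
      rcases hv with rfl | rfl
      · exact ⟨by rintro rfl; exact hw₁S huS, hwl₁⟩
      · exact ⟨by rintro rfl; exact hw₂S huS, hwl₂⟩
    calc 2 = ∑ v ∈ ({w₁, w₂} : Finset V), (if v ∈ S then 0 else 1) := by
          rw [Finset.sum_pair hww]; simp [hw₁S, hw₂S]
      _ ≤ _ := Finset.sum_le_sum_of_subset hsub
  have hsum : ∑ v ∈ (leafSet T).erase u, T.dist r v +
      ∑ v ∈ (leafSet T).erase u, (if v ∈ S then 0 else 1) ≤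
      ∑ v ∈ (leafSet T).erase u, (exch (exch T b y u b) u p y u).dist r v := by
    rw [← Finset.sum_add_distrib]
    apply Finset.sum_le_sum
    intro v hv
    have hvu := (Finset.mem_erase.1 hv).1
    have := hlip v
    simp only [hvu, if_false] at this
    omega
  have hlp := hlip p
  simp only [hp.ne.symm, hpS, if_true, if_false] at hlp
  have hpu := dist_adj hconn r hp.symm
  unfold leafDepth at hmx
  rw [hL1, Finset.sum_insert hpL, ← Finset.add_sum_erase _ _ hu] at hmx
  omega

theorem no_up [Fintype V] {G T : SimpleGraph V} {r : V} (hK : K14Free G)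
    (hT : GoodTree G T) (hr : 3 ≤ T.degree r)
    (hmax : ∀ T', GoodTree G T' → 3 ≤ T'.degree r → leafDepth T' r ≤ leafDepth T r)
    {b y u : V} {S : Set V} (hS : Cut T b y S) (hrS : r ∈ S)
    (huS : u ∈ S) (hu : u ∈ leafSet T) (hbu : G.Adj b u) : T.degree b ≤ 2 := by
  by_contra hb
  have hb : 3 ≤ T.degree b := by omega
  have htree := hT.2.1
  have hconn := htree.connected
  have hcard : 1 < ((T.neighborFinset b).erase y).card := by
    rw [Finset.card_erase_of_mem (by rw [mem_neighborFinset]; exact hS.1),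
      card_neighborFinset_eq_degree]
    omega
  obtain ⟨b₁, hb₁, b₂, hb₂, hne⟩ := Finset.one_lt_card.1 hcard
  rw [Finset.mem_erase, mem_neighborFinset] at hb₁ hb₂
  obtain ⟨W₁, h1⟩ := exists_cut_adj htree hb₁.2
  obtain ⟨W₂, h2⟩ := exists_cut_adj htree hb₂.2
  have hdis1 : ∀ v ∈ S, v ∉ W₁ := fun v hv => hS.disj hconn h1 (Ne.symm hb₁.1) hv
  have hdis2 : ∀ v ∈ S, v ∉ W₂ := fun v hv => hS.disj hconn h2 (Ne.symm hb₂.1) hv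
  have huy : u ≠ y := by
    rintro rfl
    have := leaf_side htree hS (mem_leafSet.1 hu) hrS
    subst this
    have := mem_leafSet.1 hu
    omega
  obtain ⟨hT', hL', -, -⟩ := opB hT hS huS hu hbu
  have hrb : r ≠ b := by rintro rfl; exact hS.2.1 hrS
  have hyb : ∀ c W, c ≠ y → Cut T b c W → (∀ v ∈ S, v ∉ W) → ¬ G.Adj y c := by
    intro c W hc hW hdis hadj
    have hcut : Cut (exch T b y u b) c b Wᶜ := by
      apply cut_exch hW.compl
      · exact ⟨fun _ => hW.2.1, fun _ => hdis _ huS⟩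
      · rintro (⟨h, -⟩ | ⟨h, -⟩)
        · exact hW.1.ne h.symm
        · exact hc h
    obtain ⟨-, -, hd, -⟩ := opB hT' hcut (hdis _ hS.2.2.1)
      (by rw [hL']; exact Finset.mem_insert_self _ _) hadj.symm
    have := opB_degree hS huS b
    simp only [hS.1.ne, hbu.ne, if_false] at this
    omega
  have hub : ∀ c W, Cut T b c W → (∀ v ∈ S, v ∉ W) → ¬ G.Adj u c := by
    intro c W hW hdis hadj
    obtain ⟨-, -, hd, -⟩ := opB hT hW.compl (hdis _ huS) hu hadj.symm
    omega
  refine hK ⟨b, y, u, b₁, b₂, huy.symm, hb₁.1.symm, hb₂.1.symm, ?_, ?_, hne, hT.1 hS.1, hbu,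
    hT.1 hb₁.2, hT.1 hb₂.2, ?_, ?_, ?_, ?_, ?_, ?_⟩
  · rintro rfl; exact hdis1 _ huS h1.2.2.1
  · rintro rfl; exact hdis2 _ huS h2.2.2.1
  · exact no_insert hT hr hmax hS hrS hb huS hu hbu huy h1 h2 hne hb₁.1.symm hb₂.1.symm
  · exact hyb b₁ W₁ hb₁.1 h1 hdis1
  · exact hyb b₂ W₂ hb₂.1 h2 hdis2
  · exact hub b₁ W₁ h1 hdis1
  · exact hub b₂ W₂ h2 hdis2
  · exact no_shift hT hr hmax h1 h2 hne hb hrb (hdis1 _ hrS) (hdis2 _ hrS)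

theorem leaf_degree_sum [Fintype V] {G T : SimpleGraph V} {r : V}
    (hB : ∀ T', T' ≤ G → T'.IsTree → (branchSet T').Nonempty) (hK : K14Free G)
    (hT : GoodTree G T) (hr : 3 ≤ T.degree r)
    (hmax : ∀ T', GoodTree G T' → 3 ≤ T'.degree r → leafDepth T' r ≤ leafDepth T r) :
    ∑ u ∈ leafSet T, G.degree u + (branchSet T).card ≤ Fintype.card V := by
  have htree := hT.2.1
  have hconn := htree.connected
  have hex : ∀ q : (_ : V) × V, ∃ z, q ∈ (leafSet T).sigma (fun u => G.neighborFinset u) →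
      ∃ x' S, Cut T q.2 x' S ∧ q.1 ∈ S ∧ ((r ∉ S ∧ z = x') ∨ (r ∈ S ∧ z = q.2)) := by
    rintro ⟨u, x⟩
    by_cases hq : (⟨u, x⟩ : (_ : V) × V) ∈ (leafSet T).sigma (fun u => G.neighborFinset u)
    · rw [Finset.mem_sigma, mem_neighborFinset] at hq
      obtain ⟨x', S, hS, huS⟩ := exists_cut htree hq.2.ne.symm
      by_cases hrS : r ∈ S
      · exact ⟨x, fun _ => ⟨x', S, hS, huS, Or.inr ⟨hrS, rfl⟩⟩⟩
      · exact ⟨x', fun _ => ⟨x', S, hS, huS, Or.inl ⟨hrS, rfl⟩⟩⟩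
    · exact ⟨x, fun h => absurd h hq⟩
  choose F hF using hex
  have hcard : ((leafSet T).sigma (fun u => G.neighborFinset u)).card ≤
      ((branchSet T)ᶜ).card := by
    apply Finset.card_le_card_of_injOn F
    · rintro ⟨u, x⟩ hq
      obtain ⟨x', S, hS, huS, h⟩ := hF _ hq
      rw [Finset.mem_coe, Finset.mem_sigma, mem_neighborFinset] at hq
      rw [Finset.mem_coe, Finset.mem_compl, mem_branchSet]
      obtain ⟨hu, hux⟩ := hq
      dsimp only at *
      rcases h with ⟨hrS, hz⟩ | ⟨hrS, hz⟩
      · have := (opB hT hS huS hu hux.symm).2.2.1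
        rw [hz]; omega
      · have := no_up hK hT hr hmax hS hrS huS hu hux.symm
        rw [hz]; omega
    · skip
      have mixed : ∀ u x u' y S y' S', u ∈ leafSet T → u' ∈ leafSet T → G.Adj u x → G.Adj u' y →
          Cut T x y S → u ∈ S → r ∉ S → Cut T y y' S' → u' ∈ S' → r ∈ S' → False := by
        intro u x u' y S y' S' hu hu' hux hu'y hS huS hrS hS' hu'S' hrS'
        obtain ⟨-, heq⟩ := hS.compl.unique hconn hS' hrS hrS'
        rw [← heq] at hu'S'
        have hne : u' ≠ u := by rintro rfl; exact hu'S' huS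
        exact opB_indep hB hT hS huS hu hux.symm hu' hne hu'y.symm
      rintro ⟨u, x⟩ hq ⟨u', y⟩ hq' hFF
      obtain ⟨x', S, hS, huS, h⟩ := hF _ hq
      obtain ⟨y', S', hS', hu'S', h'⟩ := hF _ hq'
      rw [Finset.mem_coe, Finset.mem_sigma, mem_neighborFinset] at hq hq'
      rw [hFF] at h
      obtain ⟨hu, hux⟩ := hq
      obtain ⟨hu', hu'y⟩ := hq'
      dsimp only at *
      rcases h with ⟨hrS, hz⟩ | ⟨hrS, hz⟩ <;> rcases h' with ⟨hrS', hz'⟩ | ⟨hrS', hz'⟩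
      · have hxy : x' = y' := hz.symm.trans hz'
        subst hxy
        obtain ⟨hxy, heq⟩ := hS.compl.unique hconn hS'.compl hrS hrS'
        subst hxy
        have heq := compl_injective heq
        subst heq
        have := same_next hB hK hT hS huS hu'S' hu hu' hux.symm hu'y.symm
        subst this
        rfl
      · have hxy : x' = y := hz.symm.trans hz'
        subst hxy
        exact (mixed u x u' x' S y' S' hu hu' hux hu'y hS huS hrS hS' hu'S' hrS').elim
      · have hxy : y' = x := hz'.symm.trans hz
        subst hxy
        exact (mixed u' y u y' S' x' S hu' hu hu'y hux hS' hu'S' hrS' hS huS hrS).elim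
      · have hxy : x = y := hz.symm.trans hz'
        subst hxy
        obtain ⟨hxy, heq⟩ := hS.unique hconn hS' hrS hrS'
        subst hxy
        subst heq
        have := same_next hB hK hT hS huS hu'S' hu hu' hux.symm hu'y.symm
        subst this
        rfl
  rw [Finset.card_sigma] at hcard
  simp only [card_neighborFinset_eq_degree] at hcard
  rw [Finset.card_compl] at hcard
  have := Finset.card_le_univ (branchSet T)
  omega

theorem leaf_branch [Fintype V] [Nontrivial V] {T : SimpleGraph V} (hT : T.IsTree) :
    (branchSet T).card + 2 ≤ (leafSet T).card ∧
      (branchSet T = ∅ → (leafSet T).card = 2) := by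
  have h1 : ∑ v, T.degree v + 2 = 2 * Fintype.card V := by
    have h2 := T.sum_degrees_eq_twice_card_edges
    have h3 := hT.card_edgeFinset
    omega
  have hpos : ∀ v, 0 < T.degree v := fun v =>
    hT.connected.preconnected.degree_pos_of_nontrivial v
  have hL : (leafSet T).card = ∑ v, if T.degree v = 1 then 1 else 0 := by
    unfold leafSet; rw [Finset.card_filter]
  have hBr : (branchSet T).card = ∑ v, if 3 ≤ T.degree v then 1 else 0 := by
    unfold branchSet; rw [Finset.card_filter]
  have hn : 2 * Fintype.card V = ∑ v : V, 2 := by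
    simp [mul_comm]
  constructor
  · have : 2 * Fintype.card V + (branchSet T).card ≤ ∑ v, T.degree v + (leafSet T).card := by
      rw [hn, hL, hBr, ← Finset.sum_add_distrib, ← Finset.sum_add_distrib]
      apply Finset.sum_le_sum
      intro v _
      have := hpos v
      split_ifs <;> omega
    omega
  · intro hB
    have : 2 * Fintype.card V = ∑ v, T.degree v + (leafSet T).card := by
      rw [hn, hL, ← Finset.sum_add_distrib]
      apply Finset.sum_congr rfl
      intro v _
      have := hpos v
      have : ¬ 3 ≤ T.degree v := by
        rw [← mem_branchSet, hB]; simp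
      split_ifs <;> omega
    omega

/-- If `G` is a connected `K_{1,4}`-free graph of order `n` with
`σ_{k+3}(G) ≥ n - k`, then `G` has a spanning tree with at most `2k+3` leaves and branch
vertices in total. -/
theorem stmt2 {V : Type*} [Fintype V] (k : ℕ)
    (G : SimpleGraph V) (hG : G.Connected) (hK : K14Free G)
    (hσ : ∀ s : Finset V, IsIndepFinset G s → s.card = k + 3 →
      Fintype.card V - k ≤ ∑ v ∈ s, G.degree v) :
    ∃ T : SimpleGraph V, T ≤ G ∧ T.IsTree ∧
      (leafSet T).card + (branchSet T).card ≤ 2 * k + 3 := by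
  by_contra hno
  have hbig : ∀ T : SimpleGraph V, T ≤ G → T.IsTree →
      2 * k + 4 ≤ (leafSet T).card + (branchSet T).card := by
    intro T h1 h2
    by_contra h
    exact hno ⟨T, h1, h2, by omega⟩
  have hne : Nonempty V := hG.nonempty
  have hnt : Nontrivial V := by
    by_contra hnt
    rw [not_nontrivial_iff_subsingleton] at hnt
    obtain ⟨T, h1, h2⟩ := hG.exists_isTree_le
    have h3 := hbig T h1 h2
    have h4 := Finset.card_le_univ (leafSet T)
    have h5 := Finset.card_le_univ (branchSet T)
    have h6 := Fintype.card_le_one_iff_subsingleton.2 hnt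
    omega
  have hB : ∀ T', T' ≤ G → T'.IsTree → (branchSet T').Nonempty := by
    intro T h1 h2
    by_contra h
    rw [Finset.not_nonempty_iff_eq_empty] at h
    have h3 := hbig T h1 h2
    have h4 := (leaf_branch h2).2 h
    rw [h] at h3
    simp at h3
    omega
  obtain ⟨T₀, ⟨h01, h02⟩, h03⟩ := Set.exists_min_image {T : SimpleGraph V | T ≤ G ∧ T.IsTree}
    (fun T => (leafSet T).card) (Set.toFinite _) (by
      obtain ⟨T, h1, h2⟩ := hG.exists_isTree_le
      exact ⟨T, h1, h2⟩)
  have hT₀ : GoodTree G T₀ := ⟨h01, h02, fun T' h1 h2 => h03 T' ⟨h1, h2⟩⟩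
  obtain ⟨r, hr⟩ := hB T₀ h01 h02
  rw [mem_branchSet] at hr
  obtain ⟨T, ⟨hT, hrT⟩, hmax⟩ := Set.exists_max_image
    {T : SimpleGraph V | GoodTree G T ∧ 3 ≤ T.degree r}
    (fun T => leafDepth T r) (Set.toFinite _) ⟨T₀, hT₀, hr⟩
  have hsum := leaf_degree_sum hB hK hT hrT (fun T' h1 h2 => hmax T' ⟨h1, h2⟩)
  have htot := hbig T hT.1 hT.2.1
  have hlb := (leaf_branch hT.2.1).1
  obtain ⟨s, hs, hsc⟩ := Finset.exists_subset_card_eq (s := leafSet T) (n := k + 3) (by omega)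
  have hdeg := hσ s (fun u hu v hv _ => leaves_indep hB hT (hs hu) (hs hv)) hsc
  have hrest : (leafSet T \ s).card ≤ ∑ v ∈ leafSet T \ s, G.degree v := by
    rw [Finset.card_eq_sum_ones]
    apply Finset.sum_le_sum
    intro v _
    exact hG.preconnected.degree_pos_of_nontrivial v
  have hsplit := Finset.sum_sdiff (f := fun v => G.degree v) hs
  have hc := Finset.card_sdiff_add_card_eq_card hs
  omega
end
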